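/- For every real k ≠ 0, the quantity e_τ(k) := (1 − 2β_t·B(u*_τ(k)/√τ, τ))·τ^{−1/4} satisfies, as τ → 0+, e_τ(k) = e₀(k) + e₁(k)·τ^{1/4} + e₂(k)·τ^{1/2} + O(τ^{3/4}). -/

import Mathlib

open Filter Topology Asymptotics MeasureTheory


noncomputable section


/-- sign convention of the paper: 1 if `0 ≤ x`, -1 otherwise. -/
def sgn' (x : ℝ) : ℝ := if 0 ≤ x then 1 else -1

/-- principal-branch complex square root `d` of the Heston Riccati discriminant. -/
def hestD (κ ρ ξ : ℝ) (w : ℂ) : ℂ :=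
  (((κ : ℂ) - (ρ : ℂ) * (ξ : ℂ) * w) ^ 2 + w * (1 - w) * (ξ : ℂ) ^ 2) ^ ((1 : ℂ) / 2)

def hestGamma (κ ρ ξ : ℝ) (w : ℂ) : ℂ :=
  ((κ : ℂ) - (ρ : ℂ) * (ξ : ℂ) * w - hestD κ ρ ξ w) /
    ((κ : ℂ) - (ρ : ℂ) * (ξ : ℂ) * w + hestD κ ρ ξ w)

def hestB (κ ρ ξ : ℝ) (w : ℂ) (τ : ℝ) : ℂ :=
  (((κ : ℂ) - (ρ : ℂ) * (ξ : ℂ) * w - hestD κ ρ ξ w) / (ξ : ℂ) ^ 2) *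
    ((1 - Complex.exp (-(hestD κ ρ ξ w) * (τ : ℂ))) /
      (1 - hestGamma κ ρ ξ w * Complex.exp (-(hestD κ ρ ξ w) * (τ : ℂ))))

def hestA (κ θ ρ ξ : ℝ) (w : ℂ) (τ : ℝ) : ℂ :=
  ((κ * θ / ξ ^ 2 : ℝ) : ℂ) *
    (((κ : ℂ) - (ρ : ℂ) * (ξ : ℂ) * w - hestD κ ρ ξ w) * (τ : ℂ) -
      2 * Complex.log ((1 - hestGamma κ ρ ξ w * Complex.exp (-(hestD κ ρ ξ w) * (τ : ℂ))) /
        (1 - hestGamma κ ρ ξ w)))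

def betaT (κ ξ t : ℝ) : ℝ := ξ ^ 2 * (1 - Real.exp (-(κ * t))) / (4 * κ)

/-- explicit Heston forward log-mgf `G_τ(w)`. -/
def hestG (κ θ ξ v ρ t : ℝ) (w : ℂ) (τ : ℝ) : ℂ :=
  hestA κ θ ρ ξ w τ +
    hestB κ ρ ξ w τ * (v : ℂ) * ((Real.exp (-(κ * t)) : ℝ) : ℂ) /
      (1 - 2 * (betaT κ ξ t : ℂ) * hestB κ ρ ξ w τ) -
    ((2 * κ * θ / ξ ^ 2 : ℝ) : ℂ) *
      Complex.log (1 - 2 * (betaT κ ξ t : ℂ) * hestB κ ρ ξ w τ)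

/-- rescaled forward log-mgf, for complex argument. -/
def hestLambdaC (κ θ ξ v ρ t τ : ℝ) (z : ℂ) : ℂ :=
  ((Real.sqrt τ : ℝ) : ℂ) * hestG κ θ ξ v ρ t (z / ((Real.sqrt τ : ℝ) : ℂ)) τ

/-- rescaled forward log-mgf `Λ_τ(u) = √τ · G_τ(u/√τ)`. -/
def hestLambda (κ θ ξ v ρ t τ : ℝ) (u : ℝ) : ℂ :=
  hestLambdaC κ θ ξ v ρ t τ (u : ℂ)

/-- `D_{t,τ}`: the maximal open interval containing `0` on which `Λ_τ` is real-valued. -/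
def hestDom (κ θ ξ v ρ t τ : ℝ) : Set ℝ :=
  connectedComponentIn (interior {u : ℝ | (hestLambda κ θ ξ v ρ t τ u).im = 0}) 0



def B1hat (ρ ξ u : ℝ) : ℝ := u / 4 * (u ^ 2 * ρ * ξ - 2)
/-- the derivative of `B1hat` in `u`. -/
def B1hat' (ρ ξ u : ℝ) : ℝ := (3 * u ^ 2 * ρ * ξ - 2) / 4

def coefA0 (κ θ ξ v ρ t k : ℝ) : ℝ := sgn' k / Real.sqrt (betaT κ ξ t)

def coefA1 (κ θ ξ v ρ t k : ℝ) : ℝ :=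
  -(coefA0 κ θ ξ v ρ t k) * Real.sqrt v * Real.exp (-(κ * t) / 2) /
    (2 * Real.sqrt |k| * betaT κ ξ t ^ ((1 : ℝ) / 4))

def coefA2 (κ θ ξ v ρ t k : ℝ) : ℝ :=
  -(κ * θ) / (k * ξ ^ 2) - B1hat ρ ξ (coefA0 κ θ ξ v ρ t k) / coefA0 κ θ ξ v ρ t k

def coefA3 (κ θ ξ v ρ t k : ℝ) : ℝ :=
  (2 * betaT κ ξ t * coefA1 κ θ ξ v ρ t k ^ 3 / (ξ ^ 4 * v ^ 2)) *
    (ξ ^ 2 * v * betaT κ ξ t * Real.exp (κ * t) *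
        (|k| * ξ ^ 2 * Real.sqrt (betaT κ ξ t) * B1hat ρ ξ (coefA0 κ θ ξ v ρ t k) -
          k * ξ ^ 2 * B1hat' ρ ξ (coefA0 κ θ ξ v ρ t k) - κ * θ) +
      (2 * κ * θ * betaT κ ξ t * Real.exp (κ * t)) ^ 2 - ξ ^ 4 * v ^ 2 / 16)

def coefE0 (κ θ ξ v ρ t k : ℝ) : ℝ := -2 * coefA1 κ θ ξ v ρ t k / coefA0 κ θ ξ v ρ t k

def coefR (κ θ ξ v ρ t k : ℝ) : ℝ :=
  coefA1 κ θ ξ v ρ t k ^ 2 / 2 - κ * θ / (|k| * ξ ^ 2 * Real.sqrt (betaT κ ξ t))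

def coefE1 (κ θ ξ v ρ t k : ℝ) : ℝ := -2 * betaT κ ξ t * coefR κ θ ξ v ρ t k

def coefE2 (κ θ ξ v ρ t k : ℝ) : ℝ :=
  -2 * betaT κ ξ t *
    (coefA1 κ θ ξ v ρ t k * coefA2 κ θ ξ v ρ t k + coefA0 κ θ ξ v ρ t k * coefA3 κ θ ξ v ρ t k +
      coefA1 κ θ ξ v ρ t k * B1hat' ρ ξ (coefA0 κ θ ξ v ρ t k))

def coefZeta (κ θ ξ v ρ t k : ℝ) : ℝ :=
  2 * Real.sqrt v * Real.exp (-(κ * t) / 2) / coefE0 κ θ ξ v ρ t k ^ ((3 : ℝ) / 2)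

def coefPsi0 (κ θ ξ v ρ t k : ℝ) : ℝ :=
  (coefA0 κ θ ξ v ρ t k * v * Real.exp (-(κ * t)) / coefE0 κ θ ξ v ρ t k ^ 3) *
    (coefE0 κ θ ξ v ρ t k ^ 2 +
      coefA0 κ θ ξ v ρ t k * betaT κ ξ t *
        (3 * coefA1 κ θ ξ v ρ t k * coefE0 κ θ ξ v ρ t k -
          2 * coefA0 κ θ ξ v ρ t k * coefE1 κ θ ξ v ρ t k))

def coefPsi1 (κ θ ξ v ρ t k : ℝ) : ℝ :=
  -4 * coefA0 κ θ ξ v ρ t k * v * betaT κ ξ t * Real.exp (-(κ * t)) / coefE0 κ θ ξ v ρ t k ^ 4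

def coefPsi2 (κ θ ξ v ρ t k : ℝ) : ℝ :=
  (v * Real.exp (-(κ * t)) / (2 * coefE0 κ θ ξ v ρ t k ^ 4)) *
    (4 * coefA0 κ θ ξ v ρ t k * betaT κ ξ t *
        (3 * coefA0 κ θ ξ v ρ t k * coefE1 κ θ ξ v ρ t k -
          4 * coefA1 κ θ ξ v ρ t k * coefE0 κ θ ξ v ρ t k) -
      5 * coefE0 κ θ ξ v ρ t k ^ 2)

def coefPsi3 (κ θ ξ v ρ t k : ℝ) : ℝ :=
  8 * v * betaT κ ξ t * Real.exp (-(κ * t)) / coefE0 κ θ ξ v ρ t k ^ 5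

def coefPsi4 (κ θ ξ v ρ t k : ℝ) : ℝ :=
  (v * Real.exp (-(κ * t)) / (2 * coefE0 κ θ ξ v ρ t k ^ 3)) *
    ((coefE1 κ θ ξ v ρ t k ^ 2 - coefE0 κ θ ξ v ρ t k * coefE2 κ θ ξ v ρ t k) / betaT κ ξ t -
      2 * coefA0 κ θ ξ v ρ t k * coefA1 κ θ ξ v ρ t k * coefE0 κ θ ξ v ρ t k *
        coefE1 κ θ ξ v ρ t k +
      2 * coefE0 κ θ ξ v ρ t k ^ 2 * coefR κ θ ξ v ρ t k)

def coefPhi2a (κ θ ξ v ρ t k : ℝ) : ℝ :=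
  coefPsi2 κ θ ξ v ρ t k - coefPsi0 κ θ ξ v ρ t k ^ 2 / 2 -
    (4 * κ * θ * betaT κ ξ t / ξ ^ 2) * (2 * κ * θ + ξ ^ 2) / (coefE0 κ θ ξ v ρ t k ^ 2 * ξ ^ 2) -
    (4 * κ * θ * betaT κ ξ t / ξ ^ 2) *
      (coefA0 κ θ ξ v ρ t k * coefPsi0 κ θ ξ v ρ t k / coefE0 κ θ ξ v ρ t k)

def coefPhi2b (κ θ ξ v ρ t k : ℝ) : ℝ :=
  coefPsi3 κ θ ξ v ρ t k - coefPsi0 κ θ ξ v ρ t k * coefPsi1 κ θ ξ v ρ t k -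
    (4 * κ * θ * betaT κ ξ t / ξ ^ 2) *
      (coefA0 κ θ ξ v ρ t k * coefPsi1 κ θ ξ v ρ t k / coefE0 κ θ ξ v ρ t k)

def coefPhi2c (κ θ ξ v ρ t k : ℝ) : ℝ := -(coefPsi1 κ θ ξ v ρ t k ^ 2) / 2

def coefC0 (κ θ ξ v ρ t k : ℝ) : ℝ := 2 * |coefA1 κ θ ξ v ρ t k * k|

def coefC1 (κ θ ξ v ρ t k : ℝ) : ℝ :=
  (v * Real.exp (-(κ * t)) / coefE0 κ θ ξ v ρ t k) *
      (coefA0 κ θ ξ v ρ t k * coefA1 κ θ ξ v ρ t k -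
        coefE1 κ θ ξ v ρ t k / (2 * betaT κ ξ t * coefE0 κ θ ξ v ρ t k)) -
    coefA2 κ θ ξ v ρ t k * k

def coefC2 (κ θ ξ v ρ t k : ℝ) : ℝ := coefE0 κ θ ξ v ρ t k ^ (-(2 * κ * θ / ξ ^ 2))

def coefZ1 (κ θ ξ v ρ t k : ℝ) : ℝ :=
  coefPsi4 κ θ ξ v ρ t k - coefA3 κ θ ξ v ρ t k * k -
    (2 * κ * θ / ξ ^ 2) * (coefE1 κ θ ξ v ρ t k / coefE0 κ θ ξ v ρ t k)

def coefP1 (κ θ ξ v ρ t k : ℝ) : ℝ :=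
  coefE0 κ θ ξ v ρ t k + coefPhi2a κ θ ξ v ρ t k / coefZeta κ θ ξ v ρ t k ^ 2 +
    3 * coefPhi2b κ θ ξ v ρ t k / coefZeta κ θ ξ v ρ t k ^ 4 +
    15 * coefPhi2c κ θ ξ v ρ t k / coefZeta κ θ ξ v ρ t k ^ 6

def phi1C (κ θ ξ v ρ t k u : ℝ) : ℂ :=
  Complex.I * (u : ℂ) *
      ((coefPsi0 κ θ ξ v ρ t k +
          4 * coefA0 κ θ ξ v ρ t k * κ * θ * betaT κ ξ t / (coefE0 κ θ ξ v ρ t k * ξ ^ 2) : ℝ) : ℂ) +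
    Complex.I * (u : ℂ) ^ 3 * ((coefPsi1 κ θ ξ v ρ t k : ℝ) : ℂ)

def phi2R (κ θ ξ v ρ t k u : ℝ) : ℝ :=
  u ^ 2 * coefPhi2a κ θ ξ v ρ t k + u ^ 4 * coefPhi2b κ θ ξ v ρ t k +
    u ^ 6 * coefPhi2c κ θ ξ v ρ t k

/-!
Put `s = √τ` and `h = τ ^ (1 / 4)`. Written with Stumpff functions, the closed forms of `A` and
`B` at `w = u / s` are smooth in `(u, s)` up to `s = 0`, and
`B = u ^ 2 / 2 + s B̂₁(u) + O(s ^ 2)`. Where `E = 1 - 2 β B` is negative, its logarithm has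
imaginary part `π`; hence `E` is nonnegative on the domain of `Λ`, which confines `u*` to a bounded
interval, and `E` is positive there because `E` and `E'` have no common zero. With `e = E / h`,
`m = v exp (-κ t)` and `c = 4 κ θ β / ξ ^ 2`, the definition of `E` and the equation `Λ' = k` become
  `h e = 1 - β u ^ 2 - 2 β h ^ 2 B̂₁(u) + O(h ^ 3)`,
  `k e ^ 2 = (u + h ^ 2 B̂₁'(u)) (m + c h e) + O(h ^ 3)`.
The first equation turns an expansion of `e` up to `O(h ^ n)` into one of `u` up to
`O(h ^ (n + 1))`, and the second turns the latter into one of `e` up to `O(h ^ (n + 1))`.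
-/

section BoundedPaths

variable {ι E F G : Type*} [NormedAddCommGroup E] [ProperSpace E] [TopologicalSpace F]
  [NormedAddCommGroup G] {l : Filter ι} {u : ι → E} {s : ι → F} {s₀ : F}

lemma eventually_of_eventually_norm_le {p : E × F → Prop} {C : ℝ}
    (hu : ∀ᶠ i in l, ‖u i‖ ≤ C) (hs : Tendsto s l (𝓝 s₀))
    (hp : ∀ x, ‖x‖ ≤ C → ∀ᶠ q in 𝓝 (x, s₀), p q) : ∀ᶠ i in l, p (u i, s i) := by
  have hK : ∀ᶠ y in 𝓝 s₀, ∀ x ∈ Metric.closedBall (0 : E) C, p (x, y) :=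
    (isCompact_closedBall 0 C).eventually_forall_of_forall_eventually fun x hx =>
      continuous_swap.continuousAt.eventually (hp x (by simpa using hx))
  filter_upwards [hu, hs.eventually hK] with i hui hsi
  exact hsi _ (by simpa using hui)

lemma eventually_of_isBigO_one {p : E × F → Prop}
    (hu : u =O[l] fun _ => (1 : ℝ)) (hs : Tendsto s l (𝓝 s₀))
    (hp : ∀ x, ∀ᶠ q in 𝓝 (x, s₀), p q) : ∀ᶠ i in l, p (u i, s i) := by
  obtain ⟨C, hC⟩ := hu.bound
  exact eventually_of_eventually_norm_le (C := C) (by simpa using hC) hs fun x _ => hp x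

lemma isBigO_one_comp_of_continuousAt {f : E × F → G}
    (hu : u =O[l] fun _ => (1 : ℝ)) (hs : Tendsto s l (𝓝 s₀))
    (hf : ∀ x, ContinuousAt f (x, s₀)) : (fun i => f (u i, s i)) =O[l] fun _ => (1 : ℝ) := by
  obtain ⟨C, hC⟩ := hu.bound
  have hcont : ContinuousOn (fun x => f (x, s₀)) (Metric.closedBall 0 C) := fun x _ =>
    ((hf x).comp (f := fun x => (x, s₀)) (by fun_prop)).continuousWithinAt
  obtain ⟨M, hM⟩ := (isCompact_closedBall (0 : E) C).exists_bound_of_continuousOn hcont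
  refine .of_bound (M + 1) ?_
  refine (eventually_of_eventually_norm_le (p := fun q => ‖f q‖ < M + 1) (C := C)
    (by simpa using hC) hs fun x hx => (hf x).norm.eventually_lt_const ?_).mono fun i hi => ?_
  · linarith [hM x (by simpa using hx)]
  · simpa using hi.le

end BoundedPaths

section DerivSlice

variable {ι : Type*} {l : Filter ι} {u s : ι → ℝ} {s₀ : ℝ}

lemma deriv_slice_eq_fderiv {f : ℝ × ℝ → ℝ} {q : ℝ × ℝ} (hf : DifferentiableAt ℝ f q) :
    deriv (fun x => f (x, q.2)) q.1 = fderiv ℝ f q (1, 0) :=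
  (hf.hasFDerivAt.comp_hasDerivAt (f := fun x => (x, q.2)) q.1
    ((hasDerivAt_id q.1).prodMk (hasDerivAt_const q.1 q.2))).deriv

lemma isBigO_one_deriv_slice {f : ℝ × ℝ → ℝ} (hu : u =O[l] fun _ => (1 : ℝ))
    (hs : Tendsto s l (𝓝 s₀)) (hf : ∀ x, ContDiffAt ℝ 1 f (x, s₀)) :
    (fun i => deriv (fun x => f (x, s i)) (u i)) =O[l] fun _ => (1 : ℝ) := by
  have hfderiv : (fun i => fderiv ℝ f (u i, s i) (1, 0)) =O[l] fun _ => (1 : ℝ) :=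
    isBigO_one_comp_of_continuousAt hu hs (f := fun q => fderiv ℝ f q (1, 0)) fun x =>
      ((hf x).continuousAt_fderiv one_ne_zero).clm_apply continuousAt_const
  have hdiff : ∀ᶠ i in l, DifferentiableAt ℝ f (u i, s i) :=
    eventually_of_isBigO_one hu hs fun x =>
      ((hf x).eventually (by simp)).mono fun q hq => hq.differentiableAt one_ne_zero
  exact hfderiv.congr' (hdiff.mono fun i hi => (deriv_slice_eq_fderiv hi).symm) .rfl

end DerivSlice

section Stumpff

/-- The Stumpff function `∑ Xⁿ / (2n + j)!` with all signs positive, so that `cosh z` and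
`sinh z / z` are the values of `stumpff 0` and `stumpff 1` at `z ^ 2`; it makes the Heston
exponents smooth across the zeros of the discriminant. -/
def stumpff (j : ℕ) (X : ℝ) : ℝ :=
  FormalMultilinearSeries.ofScalarsSum (E := ℝ) (fun n : ℕ => ((2 * n + j).factorial : ℝ)⁻¹) X

lemma tendsto_inv_factorial_ratio (j : ℕ) :
    Tendsto (fun n : ℕ => ‖((2 * n.succ + j).factorial : ℝ)⁻¹‖ / ‖((2 * n + j).factorial : ℝ)⁻¹‖)
      atTop (𝓝 0) := by
  refine squeeze_zero (fun n => by positivity) (fun n => ?_)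
    (tendsto_one_div_add_atTop_nhds_zero_nat (𝕜 := ℝ))
  have hfact : ((2 * n.succ + j).factorial : ℝ) =
      (2 * n + j + 2) * ((2 * n + j + 1) * (2 * n + j).factorial) := by
    rw [show 2 * n.succ + j = (2 * n + j + 1) + 1 by lia, Nat.factorial_succ,
      Nat.factorial_succ]
    push_cast; ring
  have hratio : ‖((2 * n.succ + j).factorial : ℝ)⁻¹‖ / ‖((2 * n + j).factorial : ℝ)⁻¹‖ =
      1 / ((2 * n + j + 2) * (2 * n + j + 1)) := by
    rw [hfact, Real.norm_of_nonneg (by positivity), Real.norm_of_nonneg (by positivity)]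
    field_simp
  rw [hratio]
  exact one_div_le_one_div_of_le (by positivity)
    (by nlinarith [(n.cast_nonneg : (0 : ℝ) ≤ n), (j.cast_nonneg : (0 : ℝ) ≤ j)])

lemma hasFPowerSeriesOnBall_stumpff (j : ℕ) :
    HasFPowerSeriesOnBall (stumpff j)
      (.ofScalars ℝ fun n : ℕ => ((2 * n + j).factorial : ℝ)⁻¹) 0 ⊤ := by
  have hradius := FormalMultilinearSeries.ofScalars_radius_eq_top_of_tendsto ℝ
    (fun n : ℕ => ((2 * n + j).factorial : ℝ)⁻¹) (.of_forall fun n => by positivity)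
    (tendsto_inv_factorial_ratio j)
  rw [← hradius]
  exact FormalMultilinearSeries.hasFPowerSeriesOnBall _ (by simp [hradius])

lemma hasSum_stumpff (j : ℕ) (X : ℝ) :
    HasSum (fun n : ℕ => X ^ n / (2 * n + j).factorial) (stumpff j X) := by
  have h := (hasFPowerSeriesOnBall_stumpff j).hasSum (y := X) (by simp)
  simpa [FormalMultilinearSeries.ofScalars_apply_eq, div_eq_mul_inv, mul_comm] using h

lemma analyticOnNhd_stumpff (j : ℕ) : AnalyticOnNhd ℝ (stumpff j) Set.univ := by
  simpa using (hasFPowerSeriesOnBall_stumpff j).analyticOnNhd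

@[fun_prop]
lemma contDiff_stumpff (j : ℕ) {n : WithTop ℕ∞} : ContDiff ℝ n (stumpff j) :=
  (analyticOnNhd_stumpff j).contDiff

lemma stumpff_eq (j : ℕ) (X : ℝ) : stumpff j X = 1 / j.factorial + X * stumpff (j + 2) X := by
  have h := (hasSum_nat_add_iff' (f := fun n : ℕ => X ^ n / (2 * n + j).factorial) 1).2
    (hasSum_stumpff j X)
  have htail : HasSum (fun n : ℕ => X ^ (n + 1) / (2 * (n + 1) + j).factorial)
      (X * stumpff (j + 2) X) := by
    refine ((hasSum_stumpff (j + 2) X).mul_left X).congr_fun fun n => ?_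
    rw [show 2 * (n + 1) + j = 2 * n + (j + 2) by ring]
    ring
  have := h.unique htail
  simp only [Finset.sum_range_one, pow_zero, mul_zero, zero_add] at this
  linarith

lemma cosh_eq_stumpff {z : ℂ} {X : ℝ} (h : z ^ 2 = X) : Complex.cosh z = stumpff 0 X := by
  refine (Complex.hasSum_cosh z).unique ?_
  exact_mod_cast (Complex.hasSum_ofReal.2 (hasSum_stumpff 0 X)).congr_fun fun n => by
    push_cast; rw [pow_mul, h, add_zero]

lemma sinh_eq_stumpff {z : ℂ} {X : ℝ} (h : z ^ 2 = X) : Complex.sinh z = z * stumpff 1 X := by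
  refine (Complex.hasSum_sinh z).unique ?_
  exact ((Complex.hasSum_ofReal.2 (hasSum_stumpff 1 X)).mul_left z).congr_fun fun n => by
    push_cast; rw [pow_succ', pow_mul, h]; ring

end Stumpff

section ClosedForms

variable (κ θ ρ ξ : ℝ)

/-- `s (κ - ρ ξ w)` at `w = u / s`. All closed forms below are in terms of the rescaled
argument `u` and `s = √τ`. -/
def hestDrift (u s : ℝ) : ℝ := κ * s - ρ * ξ * u

/-- The rescaled Riccati discriminant `(s d(w) / 2) ^ 2` at `w = u / s`. -/
def hestDiscr (u s : ℝ) : ℝ := (hestDrift κ ρ ξ u s ^ 2 + u * (s - u) * ξ ^ 2) / 4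

/-- `(d(w) τ / 2) ^ 2` at `w = u / s`, `τ = s ^ 2`. -/
def hestHalfExpSq (u s : ℝ) : ℝ := s ^ 2 * hestDiscr κ ρ ξ u s

/-- The common denominator `cosh z + (κ - ρ ξ w) sinh z / d(w)`, `z = d(w) τ / 2`, of the
closed forms of `A` and `B`. -/
def hestDen (u s : ℝ) : ℝ :=
  stumpff 0 (hestHalfExpSq κ ρ ξ u s) +
    s * hestDrift κ ρ ξ u s / 2 * stumpff 1 (hestHalfExpSq κ ρ ξ u s)

/-- Smooth real closed form of `B(u / s, s ^ 2)`. -/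
def hestBReal (u s : ℝ) : ℝ :=
  (u ^ 2 - u * s) / 2 * stumpff 1 (hestHalfExpSq κ ρ ξ u s) / hestDen κ ρ ξ u s

/-- Smooth real closed form of `A(u / s, s ^ 2)`. -/
def hestAReal (u s : ℝ) : ℝ :=
  κ * θ / ξ ^ 2 * (s * hestDrift κ ρ ξ u s - 2 * Real.log (hestDen κ ρ ξ u s))

/-- The second-order remainder of `hestDen` in `s`, see `hestDen_eq`. -/
def hestDenRem (u s : ℝ) : ℝ :=
  hestDiscr κ ρ ξ u s * stumpff 2 (hestHalfExpSq κ ρ ξ u s) + κ / 2 +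
    s * hestDrift κ ρ ξ u s / 2 * (hestDiscr κ ρ ξ u s * stumpff 3 (hestHalfExpSq κ ρ ξ u s))

/-- The second-order remainder of `hestBReal` in `s`, see `hestBReal_eq`. -/
def hestBRem (u s : ℝ) : ℝ :=
  -(ρ * ξ * u ^ 2 / 4) + (u ^ 2 - u * s) / 2 *
    ((hestDiscr κ ρ ξ u s * stumpff 3 (hestHalfExpSq κ ρ ξ u s) -
      hestDenRem κ ρ ξ u s * (1 + s * (ρ * ξ * u / 2)) + (ρ * ξ * u / 2) ^ 2) /
        hestDen κ ρ ξ u s)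

lemma hestDen_eq (u s : ℝ) :
    hestDen κ ρ ξ u s = 1 - s * (ρ * ξ * u / 2) + s ^ 2 * hestDenRem κ ρ ξ u s := by
  rw [hestDen, stumpff_eq 0, stumpff_eq 1, hestDenRem, hestHalfExpSq, hestDrift, Nat.factorial_zero,
    Nat.factorial_one, Nat.cast_one, div_one]
  ring

lemma hestBReal_eq {u s : ℝ} (h : hestDen κ ρ ξ u s ≠ 0) :
    hestBReal κ ρ ξ u s = u ^ 2 / 2 + s * B1hat ρ ξ u + s ^ 2 * hestBRem κ ρ ξ u s := by
  have hnum : stumpff 1 (hestHalfExpSq κ ρ ξ u s) =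
      1 + s ^ 2 * (hestDiscr κ ρ ξ u s * stumpff 3 (hestHalfExpSq κ ρ ξ u s)) := by
    rw [stumpff_eq 1, hestHalfExpSq, Nat.factorial_one, Nat.cast_one, div_one]
    ring
  rw [hestBReal, hestBRem, B1hat, hnum]
  field_simp
  rw [hestDen_eq]
  ring

@[simp]
lemma hestDen_zero_right (u : ℝ) : hestDen κ ρ ξ u 0 = 1 := by simp [hestDen_eq]

@[simp]
lemma hestHalfExpSq_zero_right (u : ℝ) : hestHalfExpSq κ ρ ξ u 0 = 0 := by simp [hestHalfExpSq]

lemma hasDerivAt_B1hat (u : ℝ) : HasDerivAt (B1hat ρ ξ) (B1hat' ρ ξ u) u := by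
  have h : HasDerivAt (B1hat ρ ξ) _ u :=
    ((hasDerivAt_id u).div_const 4).mul
      (((((hasDerivAt_id u).pow 2).mul_const ρ).mul_const ξ).sub_const 2)
  refine h.congr_deriv ?_
  simp only [B1hat', id, Nat.cast_ofNat]
  ring

variable {n : WithTop ℕ∞}

lemma contDiff_hestHalfExpSq :
    ContDiff ℝ n fun q : ℝ × ℝ => hestHalfExpSq κ ρ ξ q.1 q.2 := by
  unfold hestHalfExpSq hestDiscr hestDrift; fun_prop

lemma contDiff_hestDen : ContDiff ℝ n fun q : ℝ × ℝ => hestDen κ ρ ξ q.1 q.2 := by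
  unfold hestDen hestHalfExpSq hestDiscr hestDrift; fun_prop

lemma contDiff_hestDenRem : ContDiff ℝ n fun q : ℝ × ℝ => hestDenRem κ ρ ξ q.1 q.2 := by
  unfold hestDenRem hestHalfExpSq hestDiscr hestDrift; fun_prop

variable {κ θ ρ ξ}

lemma contDiffAt_hestBRem {q : ℝ × ℝ} (h : hestDen κ ρ ξ q.1 q.2 ≠ 0) :
    ContDiffAt ℝ n (fun q : ℝ × ℝ => hestBRem κ ρ ξ q.1 q.2) q := by
  have hDen := (contDiff_hestDen κ ρ ξ (n := n)).contDiffAt (x := q)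
  have hRem := (contDiff_hestDenRem κ ρ ξ (n := n)).contDiffAt (x := q)
  unfold hestBRem hestHalfExpSq hestDiscr hestDrift
  fun_prop (disch := exact h)

lemma eventually_nhds_hestDen_ne_zero {u s : ℝ} (h : hestDen κ ρ ξ u s ≠ 0) :
    ∀ᶠ y in 𝓝 u, hestDen κ ρ ξ y s ≠ 0 := by
  have hcont : Continuous fun y => hestDen κ ρ ξ y s :=
    (contDiff_hestDen κ ρ ξ (n := 0)).continuous.comp (continuous_id.prodMk continuous_const)
  exact hcont.continuousAt.eventually_ne h

lemma hasDerivAt_hestBReal {u s : ℝ} (h : hestDen κ ρ ξ u s ≠ 0) :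
    HasDerivAt (fun y => hestBReal κ ρ ξ y s)
      (u + s * B1hat' ρ ξ u + s ^ 2 * deriv (fun y => hestBRem κ ρ ξ y s) u) u := by
  have hRem : DifferentiableAt ℝ (fun y => hestBRem κ ρ ξ y s) u :=
    ((contDiffAt_hestBRem (n := 1) (q := (u, s)) h).differentiableAt one_ne_zero).comp
      (f := fun y => (y, s)) u (by fun_prop)
  have hsum := ((((hasDerivAt_id u).pow 2).div_const 2).add
    ((hasDerivAt_B1hat ρ ξ u).const_mul s)).add (hRem.hasDerivAt.const_mul (s ^ 2))
  refine (hsum.congr_deriv (by simp)).congr_of_eventuallyEq ?_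
  filter_upwards [eventually_nhds_hestDen_ne_zero h] with y hy using hestBReal_eq κ ρ ξ hy

lemma hasDerivAt_hestAReal {u s : ℝ} (h : hestDen κ ρ ξ u s ≠ 0) :
    HasDerivAt (fun y => hestAReal κ θ ρ ξ y s)
      (s * (κ * θ / ξ ^ 2 * (-(ρ * ξ) +
        (ρ * ξ - 2 * s * deriv (fun y => hestDenRem κ ρ ξ y s) u) / hestDen κ ρ ξ u s))) u := by
  have hRem : DifferentiableAt ℝ (fun y => hestDenRem κ ρ ξ y s) u :=
    ((contDiff_hestDenRem κ ρ ξ (n := 1)).differentiable one_ne_zero _).comp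
      (f := fun y => (y, s)) u (by fun_prop)
  have hDen : HasDerivAt (fun y => hestDen κ ρ ξ y s)
      (-(s * (ρ * ξ / 2)) + s ^ 2 * deriv (fun y => hestDenRem κ ρ ξ y s) u) u := by
    simp only [hestDen_eq κ ρ ξ _ s]
    exact ((((((hasDerivAt_id u).const_mul (ρ * ξ)).div_const 2).const_mul s).const_sub 1).add
      (hRem.hasDerivAt.const_mul (s ^ 2))).congr_deriv (by simp)
  have hDrift : HasDerivAt (fun y => hestDrift κ ρ ξ y s) (-(ρ * ξ)) u :=
    (((hasDerivAt_id u).const_mul (ρ * ξ)).const_sub (κ * s)).congr_deriv (by simp)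
  refine (((hDrift.const_mul s).sub ((hDen.log h).const_mul 2)).const_mul
    (κ * θ / ξ ^ 2)).congr_deriv ?_
  field_simp
  ring

section BoundedPath

variable {ι : Type*} {l : Filter ι} {u s : ι → ℝ}

lemma eventually_hestDen_pos (hu : u =O[l] fun _ => (1 : ℝ)) (hs : Tendsto s l (𝓝 0)) :
    ∀ᶠ i in l, 0 < hestDen κ ρ ξ (u i) (s i) :=
  eventually_of_isBigO_one (p := fun q => 0 < hestDen κ ρ ξ q.1 q.2) hu hs fun _ =>
    (contDiff_hestDen κ ρ ξ (n := 0)).continuous.continuousAt.eventually_const_lt (by simp)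

lemma eventually_abs_hestHalfExpSq_lt (hu : u =O[l] fun _ => (1 : ℝ)) (hs : Tendsto s l (𝓝 0)) :
    ∀ᶠ i in l, |hestHalfExpSq κ ρ ξ (u i) (s i)| < Real.pi ^ 2 :=
  eventually_of_isBigO_one (p := fun q => |hestHalfExpSq κ ρ ξ q.1 q.2| < Real.pi ^ 2) hu hs
    fun _ => (contDiff_hestHalfExpSq κ ρ ξ (n := 0)).continuous.abs.continuousAt.eventually_lt_const
      (by simp only [hestHalfExpSq_zero_right, abs_zero]; positivity)

lemma hestBReal_sub_isBigO (hu : u =O[l] fun _ => (1 : ℝ)) (hs : Tendsto s l (𝓝 0)) :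
    (fun i => hestBReal κ ρ ξ (u i) (s i) - (u i ^ 2 / 2 + s i * B1hat ρ ξ (u i)))
      =O[l] fun i => s i ^ 2 := by
  have hRem := isBigO_one_comp_of_continuousAt (f := fun q => hestBRem κ ρ ξ q.1 q.2) hu hs
    fun x => (contDiffAt_hestBRem (n := 0) (by simp)).continuousAt
  refine ((isBigO_refl (fun i => s i ^ 2) l).mul hRem).congr' ?_ (by simp)
  filter_upwards [eventually_hestDen_pos (κ := κ) (ρ := ρ) (ξ := ξ) hu hs] with i hi
  rw [hestBReal_eq κ ρ ξ hi.ne']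
  ring

lemma deriv_hestBReal_sub_isBigO (hu : u =O[l] fun _ => (1 : ℝ)) (hs : Tendsto s l (𝓝 0)) :
    (fun i => deriv (fun y => hestBReal κ ρ ξ y (s i)) (u i) - (u i + s i * B1hat' ρ ξ (u i)))
      =O[l] fun i => s i ^ 2 := by
  have hRem := isBigO_one_deriv_slice (f := fun q => hestBRem κ ρ ξ q.1 q.2) hu hs
    fun x => contDiffAt_hestBRem (by simp)
  refine ((isBigO_refl (fun i => s i ^ 2) l).mul hRem).congr' ?_ (by simp)
  filter_upwards [eventually_hestDen_pos (κ := κ) (ρ := ρ) (ξ := ξ) hu hs] with i hi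
  rw [(hasDerivAt_hestBReal hi.ne').deriv]
  ring

lemma deriv_hestAReal_isBigO (hu : u =O[l] fun _ => (1 : ℝ)) (hs : Tendsto s l (𝓝 0)) :
    (fun i => deriv (fun y => hestAReal κ θ ρ ξ y (s i)) (u i)) =O[l] s := by
  have hRem := isBigO_one_deriv_slice (f := fun q => hestDenRem κ ρ ξ q.1 q.2) hu hs
    fun x => (contDiff_hestDenRem κ ρ ξ).contDiffAt
  have hinv := isBigO_one_comp_of_continuousAt (f := fun q => (hestDen κ ρ ξ q.1 q.2)⁻¹) hu hs
    fun x => (contDiff_hestDen κ ρ ξ (n := 0)).continuous.continuousAt.inv₀ (by simp)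
  have hconst (c : ℝ) : (fun _ => c) =O[l] fun _ => (1 : ℝ) := isBigO_const_const c one_ne_zero l
  have hbdd : (fun i => κ * θ / ξ ^ 2 * (-(ρ * ξ) +
      (ρ * ξ - 2 * s i * deriv (fun y => hestDenRem κ ρ ξ y (s i)) (u i)) *
        (hestDen κ ρ ξ (u i) (s i))⁻¹)) =O[l] fun _ => (1 : ℝ) := by
    have hnum : (fun i => ρ * ξ - 2 * s i * deriv (fun y => hestDenRem κ ρ ξ y (s i)) (u i))
        =O[l] fun _ => (1 : ℝ) :=
      (hconst _).sub ((((hs.isBigO_one ℝ).const_mul_left 2).mul hRem).congr_right (by simp))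
    exact ((hconst _).add ((hnum.mul hinv).congr_right (by simp))).const_mul_left _
  refine ((isBigO_refl s l).mul hbdd).congr' ?_ (by simp)
  filter_upwards [eventually_hestDen_pos (κ := κ) (ρ := ρ) (ξ := ξ) hu hs] with i hi
  rw [(hasDerivAt_hestAReal hi.ne').deriv, div_eq_mul_inv _ (hestDen κ ρ ξ (u i) (s i))]

end BoundedPath

end ClosedForms

section PrincipalBranch

lemma hestD_sq (κ ρ ξ : ℝ) (w : ℂ) :
    hestD κ ρ ξ w ^ 2 = (κ - ρ * ξ * w) ^ 2 + w * (1 - w) * (ξ : ℂ) ^ 2 := by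
  simp [hestD]

lemma one_sub_exp_neg_two_mul (z : ℂ) :
    1 - Complex.exp (-(2 * z)) = 2 * Complex.exp (-z) * Complex.sinh z := by
  have hexp : Complex.exp z * Complex.exp (-z) = 1 := by
    rw [← Complex.exp_add, add_neg_cancel, Complex.exp_zero]
  rw [Complex.sinh, show -(2 * z) = -z + -z by ring, Complex.exp_add]
  linear_combination (-1 : ℂ) * hexp

lemma one_sub_div_mul_exp_neg_two_mul {c d : ℂ} (h : c + d ≠ 0) (z : ℂ) :
    1 - (c - d) / (c + d) * Complex.exp (-(2 * z)) =
      2 * Complex.exp (-z) * (d * Complex.cosh z + c * Complex.sinh z) / (c + d) := by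
  have hexp : Complex.exp z * Complex.exp (-z) = 1 := by
    rw [← Complex.exp_add, add_neg_cancel, Complex.exp_zero]
  field_simp
  rw [Complex.sinh, Complex.cosh, show -(2 * z) = -z + -z by ring, Complex.exp_add]
  linear_combination (-(c + d)) * hexp

variable {κ θ ρ ξ u s : ℝ}

/-- The rescaled points at which the principal-branch formulas for `A` and `B` are free of
divisions by zero and the logarithm in `A` stays in the strip where it inverts `exp`. -/
structure HestRegular (κ ρ ξ u s : ℝ) : Prop where
  ne_zero : u ≠ 0
  ne : u ≠ s
  halfExpSq_ne_zero : hestHalfExpSq κ ρ ξ u s ≠ 0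
  abs_halfExpSq_lt : |hestHalfExpSq κ ρ ξ u s| < Real.pi ^ 2
  den_pos : 0 < hestDen κ ρ ξ u s

lemma hestD_mul_half_sq (hs : s ≠ 0) :
    (hestD κ ρ ξ (u / s) * s ^ 2 / 2) ^ 2 = (hestHalfExpSq κ ρ ξ u s : ℂ) := by
  have hsC : (s : ℂ) ≠ 0 := mod_cast hs
  rw [div_pow, mul_pow, hestD_sq, hestHalfExpSq, hestDiscr, hestDrift]
  push_cast
  field_simp
  ring

lemma hestD_ne_zero (hs : s ≠ 0) (h : hestHalfExpSq κ ρ ξ u s ≠ 0) :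
    hestD κ ρ ξ (u / s) ≠ 0 := by
  intro h0
  have := hestD_mul_half_sq (κ := κ) (ρ := ρ) (ξ := ξ) (u := u) hs
  simp only [h0, zero_mul, zero_div, ne_eq, two_ne_zero, not_false_eq_true, zero_pow] at this
  exact h (mod_cast this.symm)

lemma add_hestD_ne_zero (hξ : ξ ≠ 0) (hs : s ≠ 0) (hu : u ≠ 0) (hus : u ≠ s) :
    (κ - ρ * ξ * (u / s) + hestD κ ρ ξ (u / s) : ℂ) ≠ 0 := by
  intro h0
  have hw : (u / s : ℂ) * (1 - u / s) * ξ ^ 2 = 0 := by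
    linear_combination (-(κ - ρ * ξ * (u / s) - hestD κ ρ ξ (u / s) : ℂ)) * h0 -
      hestD_sq κ ρ ξ (u / s)
  have hw1 : (1 - u / s : ℂ) ≠ 0 := by
    rw [sub_ne_zero, ne_comm, ne_eq, div_eq_one_iff_eq (mod_cast hs)]
    exact mod_cast hus
  simp [hu, hs, hξ, hw1] at hw

lemma hestD_mul_cosh_add_sinh (hs : s ≠ 0) :
    hestD κ ρ ξ (u / s) * Complex.cosh (hestD κ ρ ξ (u / s) * s ^ 2 / 2) +
      (κ - ρ * ξ * (u / s)) * Complex.sinh (hestD κ ρ ξ (u / s) * s ^ 2 / 2) =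
    hestD κ ρ ξ (u / s) * hestDen κ ρ ξ u s := by
  have hsC : (s : ℂ) ≠ 0 := mod_cast hs
  rw [cosh_eq_stumpff (hestD_mul_half_sq hs), sinh_eq_stumpff (hestD_mul_half_sq hs), hestDen,
    hestDrift]
  push_cast
  field_simp

lemma one_sub_hestGamma_mul_exp (hξ : ξ ≠ 0) (hs : s ≠ 0) (hu : u ≠ 0) (hus : u ≠ s) :
    1 - hestGamma κ ρ ξ (u / s) * Complex.exp (-hestD κ ρ ξ (u / s) * (s ^ 2 : ℝ)) =
      2 * Complex.exp (-(hestD κ ρ ξ (u / s) * s ^ 2 / 2)) *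
        (hestD κ ρ ξ (u / s) * hestDen κ ρ ξ u s) /
          (κ - ρ * ξ * (u / s) + hestD κ ρ ξ (u / s)) := by
  rw [← hestD_mul_cosh_add_sinh hs,
    ← one_sub_div_mul_exp_neg_two_mul (add_hestD_ne_zero hξ hs hu hus), hestGamma]
  push_cast
  congr 3
  ring

lemma hestB_eq_hestBReal (hξ : ξ ≠ 0) (hs : s ≠ 0) (h : HestRegular κ ρ ξ u s) :
    hestB κ ρ ξ (u / s) (s ^ 2) = hestBReal κ ρ ξ u s := by
  have hsC : (s : ℂ) ≠ 0 := mod_cast hs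
  have hξC : (ξ : ℂ) ≠ 0 := mod_cast hξ
  have hDenC : (hestDen κ ρ ξ u s : ℂ) ≠ 0 := mod_cast h.den_pos.ne'
  have hD := hestD_ne_zero hs h.halfExpSq_ne_zero
  have hcD := add_hestD_ne_zero (κ := κ) (ρ := ρ) hξ hs h.ne_zero h.ne
  have hexp : 1 - Complex.exp (-hestD κ ρ ξ (u / s) * (s ^ 2 : ℝ)) =
      2 * Complex.exp (-(hestD κ ρ ξ (u / s) * s ^ 2 / 2)) *
        (hestD κ ρ ξ (u / s) * s ^ 2 / 2 * stumpff 1 (hestHalfExpSq κ ρ ξ u s)) := by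
    rw [← sinh_eq_stumpff (hestD_mul_half_sq hs), ← one_sub_exp_neg_two_mul]
    push_cast
    congr 2
    ring
  have hD2 := hestD_sq κ ρ ξ (u / s)
  rw [hestB, one_sub_hestGamma_mul_exp hξ hs h.ne_zero h.ne, hexp, hestBReal]
  generalize hestD κ ρ ξ (u / s) = d at *
  push_cast
  generalize (κ - ρ * ξ * (u / s) : ℂ) = c at *
  have hdiff : (c - d) * (c + d) = -(u / s * (1 - u / s) * ξ ^ 2) := by linear_combination -hD2
  have hE := Complex.exp_ne_zero (-(d * s ^ 2 / 2))
  calc _ = (c - d) * (c + d) * (s ^ 2 / 2 * stumpff 1 (hestHalfExpSq κ ρ ξ u s)) /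
        (ξ ^ 2 * hestDen κ ρ ξ u s) := by field_simp
    _ = _ := by rw [hdiff]; field_simp; ring

lemma hestA_eq_hestAReal (hξ : ξ ≠ 0) (hs : s ≠ 0) (h : HestRegular κ ρ ξ u s) :
    hestA κ θ ρ ξ (u / s) (s ^ 2) = hestAReal κ θ ρ ξ u s := by
  have hsC : (s : ℂ) ≠ 0 := mod_cast hs
  have hD := hestD_ne_zero hs h.halfExpSq_ne_zero
  have hcD := add_hestD_ne_zero (κ := κ) (ρ := ρ) hξ hs h.ne_zero h.ne
  have hratio : (1 - hestGamma κ ρ ξ (u / s) *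
      Complex.exp (-hestD κ ρ ξ (u / s) * (s ^ 2 : ℝ))) / (1 - hestGamma κ ρ ξ (u / s)) =
        hestDen κ ρ ξ u s * Complex.exp (-(hestD κ ρ ξ (u / s) * s ^ 2 / 2)) := by
    have hγ : 1 - hestGamma κ ρ ξ (u / s) =
        2 * hestD κ ρ ξ (u / s) / (κ - ρ * ξ * (u / s) + hestD κ ρ ξ (u / s)) := by
      rw [hestGamma, eq_div_iff hcD, sub_mul, div_mul_cancel₀ _ hcD]
      ring
    rw [one_sub_hestGamma_mul_exp hξ hs h.ne_zero h.ne, hγ]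
    generalize (κ - ρ * ξ * (u / s) : ℂ) = c at hcD
    field_simp
  have hz := hestD_mul_half_sq (κ := κ) (ρ := ρ) (ξ := ξ) (u := u) hs
  rw [hestA, hratio, hestAReal]
  generalize hestD κ ρ ξ (u / s) = d at *
  have him : |(d * s ^ 2 / 2).im| < Real.pi := by
    refine (Complex.abs_im_le_norm _).trans_lt (lt_of_pow_lt_pow_left₀ 2 Real.pi_pos.le ?_)
    rw [← norm_pow, hz, Complex.norm_real]
    exact h.abs_halfExpSq_lt
  have hlog : Complex.log (Complex.exp (-(d * s ^ 2 / 2))) = -(d * s ^ 2 / 2) := by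
    refine Complex.log_exp ?_ ?_ <;> rw [Complex.neg_im]
    · linarith [(abs_lt.1 him).2]
    · linarith [(abs_lt.1 him).1]
  rw [Complex.log_ofReal_mul h.den_pos (Complex.exp_ne_zero _), hlog, hestDrift]
  push_cast
  field_simp
  ring

end PrincipalBranch

section ForwardLogMgf

variable {κ θ ρ ξ v t u s k : ℝ}

/-- Real closed form of `1 - 2 β B(u / s, s ^ 2)`. -/
def hestEReal (β κ ρ ξ u s : ℝ) : ℝ := 1 - 2 * β * hestBReal κ ρ ξ u s

/-- Real closed form of the rescaled forward log-mgf `Λ`, valid where `hestEReal` is positive. -/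
def hestLambdaReal (κ θ ξ v ρ t u s : ℝ) : ℝ :=
  s * (hestAReal κ θ ρ ξ u s + hestBReal κ ρ ξ u s * v * Real.exp (-(κ * t)) /
    hestEReal (betaT κ ξ t) κ ρ ξ u s -
      2 * κ * θ / ξ ^ 2 * Real.log (hestEReal (betaT κ ξ t) κ ρ ξ u s))

lemma eventually_nhds_abs_hestHalfExpSq_lt (h : |hestHalfExpSq κ ρ ξ u s| < Real.pi ^ 2) :
    ∀ᶠ x in 𝓝 u, |hestHalfExpSq κ ρ ξ x s| < Real.pi ^ 2 := by
  have hcont : Continuous fun x => hestHalfExpSq κ ρ ξ x s :=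
    (contDiff_hestHalfExpSq κ ρ ξ (n := 0)).continuous.comp (continuous_id.prodMk continuous_const)
  exact hcont.abs.continuousAt.eventually_lt_const h

lemma eventually_nhds_hestDen_pos (h : 0 < hestDen κ ρ ξ u s) :
    ∀ᶠ x in 𝓝 u, 0 < hestDen κ ρ ξ x s := by
  have hcont : Continuous fun x => hestDen κ ρ ξ x s :=
    (contDiff_hestDen κ ρ ξ (n := 0)).continuous.comp (continuous_id.prodMk continuous_const)
  exact hcont.continuousAt.eventually_const_lt h

lemma eventually_nhdsNE_hestHalfExpSq_ne_zero (hκ : κ ≠ 0) (hs : s ≠ 0) :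
    ∀ᶠ x in 𝓝[≠] u, hestHalfExpSq κ ρ ξ x s ≠ 0 := by
  have han : AnalyticOnNhd ℝ (fun x => hestHalfExpSq κ ρ ξ x s) Set.univ := by
    unfold hestHalfExpSq hestDiscr hestDrift
    intro x _
    fun_prop
  by_contra hfreq
  have hzero := congrFun (han.eq_of_frequently_eq (g := fun _ => 0) analyticOnNhd_const hfreq) 0
  simp [hestHalfExpSq, hestDiscr, hestDrift, hκ, hs] at hzero

lemma eventually_nhdsNE_hestRegular (hκ : κ ≠ 0) (hs : s ≠ 0)
    (hX : |hestHalfExpSq κ ρ ξ u s| < Real.pi ^ 2) (hDen : 0 < hestDen κ ρ ξ u s) :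
    ∀ᶠ x in 𝓝[≠] u, HestRegular κ ρ ξ x s := by
  have hne (a : ℝ) : ∀ᶠ x in 𝓝[≠] u, x ≠ a := by
    obtain rfl | hua := eq_or_ne u a
    exacts [self_mem_nhdsWithin, eventually_ne_nhdsWithin hua]
  filter_upwards [hne 0, hne s, eventually_nhdsNE_hestHalfExpSq_ne_zero hκ hs,
    nhdsWithin_le_nhds (eventually_nhds_abs_hestHalfExpSq_lt hX),
    nhdsWithin_le_nhds (eventually_nhds_hestDen_pos hDen)] with x h0 hxs hX0 hXlt hD
  exact ⟨h0, hxs, hX0, hXlt, hD⟩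

lemma hestLambda_eq (hξ : ξ ≠ 0) (hs : 0 < s) (h : HestRegular κ ρ ξ u s) :
    hestLambda κ θ ξ v ρ t (s ^ 2) u =
      ((s * (hestAReal κ θ ρ ξ u s + hestBReal κ ρ ξ u s * v * Real.exp (-(κ * t)) /
        hestEReal (betaT κ ξ t) κ ρ ξ u s) : ℝ) : ℂ) -
      ((s * (2 * κ * θ / ξ ^ 2) : ℝ) : ℂ) *
        Complex.log (hestEReal (betaT κ ξ t) κ ρ ξ u s : ℝ) := by
  rw [hestLambda, hestLambdaC, hestG, Real.sqrt_sq hs.le, hestA_eq_hestAReal hξ hs.ne' h,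
    hestB_eq_hestBReal hξ hs.ne' h, hestEReal]
  push_cast
  ring

lemma hestLambda_im (hξ : ξ ≠ 0) (hs : 0 < s) (h : HestRegular κ ρ ξ u s) :
    (hestLambda κ θ ξ v ρ t (s ^ 2) u).im =
      -(s * (2 * κ * θ / ξ ^ 2) * Complex.arg (hestEReal (betaT κ ξ t) κ ρ ξ u s : ℝ)) := by
  rw [hestLambda_eq hξ hs h, Complex.sub_im, Complex.ofReal_im, Complex.im_ofReal_mul,
    Complex.log_im, zero_sub]

lemma hestLambda_eq_hestLambdaReal (hξ : ξ ≠ 0) (hs : 0 < s) (h : HestRegular κ ρ ξ u s)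
    (hE : 0 ≤ hestEReal (betaT κ ξ t) κ ρ ξ u s) :
    hestLambda κ θ ξ v ρ t (s ^ 2) u = hestLambdaReal κ θ ξ v ρ t u s := by
  rw [hestLambda_eq hξ hs h, ← Complex.ofReal_log hE, hestLambdaReal]
  push_cast
  ring

lemma hestEReal_nonneg_of_im_eq_zero (hκ : κ ≠ 0) (hθ : θ ≠ 0) (hξ : ξ ≠ 0) (hs : 0 < s)
    (h : HestRegular κ ρ ξ u s) (him : (hestLambda κ θ ξ v ρ t (s ^ 2) u).im = 0) :
    0 ≤ hestEReal (betaT κ ξ t) κ ρ ξ u s := by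
  by_contra! hE
  rw [hestLambda_im hξ hs h, Complex.arg_ofReal_of_neg hE] at him
  simp [hκ, hθ, hξ, hs.ne', Real.pi_ne_zero] at him

lemma hasDerivAt_hestEReal (β : ℝ) (hDen : 0 < hestDen κ ρ ξ u s) :
    HasDerivAt (fun x => hestEReal β κ ρ ξ x s)
      (-(2 * β * deriv (fun x => hestBReal κ ρ ξ x s) u)) u :=
  ((hasDerivAt_hestBReal hDen.ne').differentiableAt.hasDerivAt.const_mul (2 * β)).const_sub 1

lemma hestEReal_nonneg_of_mem_interior (hκ : κ ≠ 0) (hθ : θ ≠ 0) (hξ : ξ ≠ 0) (hs : 0 < s)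
    (hX : |hestHalfExpSq κ ρ ξ u s| < Real.pi ^ 2) (hDen : 0 < hestDen κ ρ ξ u s)
    (hu : u ∈ interior {x : ℝ | (hestLambda κ θ ξ v ρ t (s ^ 2) x).im = 0}) :
    0 ≤ hestEReal (betaT κ ξ t) κ ρ ξ u s := by
  refine ge_of_tendsto ((hasDerivAt_hestEReal _ hDen).continuousAt.tendsto.mono_left
    nhdsWithin_le_nhds) (?_ : ∀ᶠ x in 𝓝[≠] u, _)
  filter_upwards [eventually_nhdsNE_hestRegular hκ hs.ne' hX hDen,
    nhdsWithin_le_nhds (mem_interior_iff_mem_nhds.1 hu)] with x hreg him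
  exact hestEReal_nonneg_of_im_eq_zero hκ hθ hξ hs hreg him

/- `E` is nonnegative in a neighbourhood of `u`, so a zero there would be a local minimum. -/
lemma hestEReal_pos_of_mem_interior (hκ : κ ≠ 0) (hθ : θ ≠ 0) (hξ : ξ ≠ 0) (hs : 0 < s)
    (hX : |hestHalfExpSq κ ρ ξ u s| < Real.pi ^ 2) (hDen : 0 < hestDen κ ρ ξ u s)
    (hu : u ∈ interior {x : ℝ | (hestLambda κ θ ξ v ρ t (s ^ 2) x).im = 0})
    (hE' : hestEReal (betaT κ ξ t) κ ρ ξ u s = 0 →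
      deriv (fun x => hestEReal (betaT κ ξ t) κ ρ ξ x s) u ≠ 0) :
    0 < hestEReal (betaT κ ξ t) κ ρ ξ u s := by
  have hnonneg : ∀ᶠ x in 𝓝 u, 0 ≤ hestEReal (betaT κ ξ t) κ ρ ξ x s := by
    filter_upwards [eventually_nhds_abs_hestHalfExpSq_lt hX, eventually_nhds_hestDen_pos hDen,
      isOpen_interior.mem_nhds hu] with x hXx hDx hx
    exact hestEReal_nonneg_of_mem_interior hκ hθ hξ hs hXx hDx hx
  refine hnonneg.self_of_nhds.lt_of_ne' fun h0 => hE' h0 ?_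
  have hmin : IsLocalMin (fun x => hestEReal (betaT κ ξ t) κ ρ ξ x s) u := by
    simpa only [IsLocalMin, IsMinFilter, h0] using hnonneg
  exact hmin.deriv_eq_zero

lemma hasDerivAt_hestLambdaReal (hDen : 0 < hestDen κ ρ ξ u s)
    (hE : 0 < hestEReal (betaT κ ξ t) κ ρ ξ u s) :
    HasDerivAt (fun x => hestLambdaReal κ θ ξ v ρ t x s)
      (s * (deriv (fun x => hestAReal κ θ ρ ξ x s) u +
        deriv (fun x => hestBReal κ ρ ξ x s) u * (v * Real.exp (-(κ * t)) +
          4 * κ * θ * betaT κ ξ t / ξ ^ 2 * hestEReal (betaT κ ξ t) κ ρ ξ u s) /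
            hestEReal (betaT κ ξ t) κ ρ ξ u s ^ 2)) u := by
  have hA := (hasDerivAt_hestAReal (θ := θ) hDen.ne').differentiableAt.hasDerivAt
  have hB := (hasDerivAt_hestBReal hDen.ne').differentiableAt.hasDerivAt
  have hE' := hasDerivAt_hestEReal (betaT κ ξ t) hDen
  refine (((hA.add (((hB.mul_const v).mul_const (Real.exp (-(κ * t)))).div hE' hE.ne')).sub
    ((hE'.log hE.ne').const_mul (2 * κ * θ / ξ ^ 2))).const_mul s).congr_deriv ?_
  have hBE : hestBReal κ ρ ξ u s * (2 * betaT κ ξ t) = 1 - hestEReal (betaT κ ξ t) κ ρ ξ u s := by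
    rw [hestEReal]; ring
  generalize hestEReal (betaT κ ξ t) κ ρ ξ u s = E at *
  field_simp
  linear_combination s * deriv (fun x => hestBReal κ ρ ξ x s) u * v *
    Real.exp (-(κ * t)) * hBE

lemma eq_of_deriv_hestLambda_eq (hκ : κ ≠ 0) (hξ : ξ ≠ 0) (hs : 0 < s) (hk : k ≠ 0)
    (hX : |hestHalfExpSq κ ρ ξ u s| < Real.pi ^ 2) (hDen : 0 < hestDen κ ρ ξ u s)
    (hE : 0 < hestEReal (betaT κ ξ t) κ ρ ξ u s)
    (hder : deriv (hestLambda κ θ ξ v ρ t (s ^ 2)) u = k) :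
    k = s * (deriv (fun x => hestAReal κ θ ρ ξ x s) u +
      deriv (fun x => hestBReal κ ρ ξ x s) u * (v * Real.exp (-(κ * t)) +
        4 * κ * θ * betaT κ ξ t / ξ ^ 2 * hestEReal (betaT κ ξ t) κ ρ ξ u s) /
          hestEReal (betaT κ ξ t) κ ρ ξ u s ^ 2) := by
  have hreal := (hasDerivAt_hestLambdaReal (θ := θ) (v := v) hDen hE).ofReal_comp
  have hEpos := (hasDerivAt_hestEReal _ hDen).continuousAt.eventually_const_lt hE
  have hNE : hestLambda κ θ ξ v ρ t (s ^ 2) =ᶠ[𝓝[≠] u]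
      fun x => (hestLambdaReal κ θ ξ v ρ t x s : ℂ) := by
    filter_upwards [eventually_nhdsNE_hestRegular hκ hs.ne' hX hDen,
      nhdsWithin_le_nhds hEpos] with x hreg hEx
    exact hestLambda_eq_hestLambdaReal hξ hs hreg hEx.le
  have hdiff : DifferentiableAt ℝ (hestLambda κ θ ξ v ρ t (s ^ 2)) u :=
    differentiableAt_of_deriv_ne_zero (by rw [hder]; exact mod_cast hk)
  rw [((hdiff.continuousAt.eventuallyEq_nhds_iff_eventuallyEq_nhdsNE
    hreal.continuousAt).1 hNE).deriv_eq, hreal.deriv] at hder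
  exact mod_cast hder.symm

end ForwardLogMgf

section SaddleSystem

variable {ι : Type*} {l : Filter ι} {h u e : ι → ℝ} {k β m c : ℝ} {f g : ℝ → ℝ}
  {a₀ a₁ a₂ e₀ e₁ e₂ : ℝ}

lemma isBigO_one_mul {x y w : ι → ℝ} (hx : x =O[l] fun _ => (1 : ℝ)) (hy : y =O[l] w) :
    (fun i => x i * y i) =O[l] w := by
  simpa using hx.mul hy

lemma isBigO_pow_of_le {n p : ℕ} (hh : Tendsto h l (𝓝 0)) (hnp : n ≤ p) :
    (fun i => h i ^ p) =O[l] fun i => h i ^ n :=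
  (isBigO_one_mul ((hh.isBigO_one ℝ).pow (p - n) |>.congr_right (by simp))
    (isBigO_refl (fun i => h i ^ n) l)).congr_left fun i => by
      simp [← pow_add, Nat.sub_add_cancel hnp]

lemma isBigO_sub_of_sq_sub_sq {x y : ι → ℝ} {δ : ℝ} (hδ : 0 < δ)
    (hxy : ∀ᶠ i in l, δ ≤ |x i + y i|) :
    (fun i => x i - y i) =O[l] fun i => x i ^ 2 - y i ^ 2 := by
  refine .of_bound δ⁻¹ (hxy.mono fun i hi => ?_)
  rw [sq_sub_sq, norm_mul, inv_mul_eq_div, le_div_iff₀' hδ]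
  exact mul_le_mul_of_nonneg_right hi (norm_nonneg _)

lemma isBigO_sub_of_tendsto_of_sq_sub_sq {x y : ι → ℝ} {a : ℝ} (ha : a ≠ 0)
    (hx : Tendsto x l (𝓝 a)) (hy : Tendsto y l (𝓝 a)) :
    (fun i => x i - y i) =O[l] fun i => x i ^ 2 - y i ^ 2 := by
  refine isBigO_sub_of_sq_sub_sq (abs_pos.2 ha) ?_
  have hlt : |a| < |a + a| := by
    rw [← two_mul, abs_mul, abs_two]
    linarith [abs_pos.2 ha]
  exact ((hx.add hy).abs.eventually_const_lt hlt).mono fun i => le_of_lt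

/-- The second-order expansion `x₀ + x₁ h + x₂ h ^ 2`, for naming truncated asymptotic
expansions. -/
def quadExpansion (x₀ x₁ x₂ h : ℝ) : ℝ := x₀ + x₁ * h + x₂ * h ^ 2

lemma quadExpansion_sub_isBigO (x₀ x₁ x₂ : ℝ) (hh : Tendsto h l (𝓝 0)) :
    (fun i => quadExpansion x₀ x₁ x₂ (h i) - x₀) =O[l] h := by
  have hbdd : (fun i => x₁ + x₂ * h i) =O[l] fun _ => (1 : ℝ) :=
    (tendsto_const_nhds.add (hh.const_mul x₂)).isBigO_one ℝ
  refine (isBigO_one_mul hbdd (isBigO_refl h l)).congr_left fun i => ?_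
  rw [quadExpansion]
  ring

lemma tendsto_quadExpansion (x₀ x₁ x₂ : ℝ) (hh : Tendsto h l (𝓝 0)) :
    Tendsto (fun i => quadExpansion x₀ x₁ x₂ (h i)) l (𝓝 x₀) :=
  tendsto_sub_nhds_zero_iff.1 ((quadExpansion_sub_isBigO x₀ x₁ x₂ hh).trans_tendsto hh)

/-- The two saddlepoint equations for the rescaled saddlepoint `u` and the rescaled denominator
`e = E / h`, up to errors of order `h ^ 3`, where `h = τ ^ (1 / 4)`. In the application `f` and `g`
are `B̂₁` and its derivative. -/
structure SaddleSystem (l : Filter ι) (h u e : ι → ℝ) (k β m c : ℝ) (f g : ℝ → ℝ) : Prop where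
  tendsto : Tendsto h l (𝓝 0)
  u_isBigO : u =O[l] fun _ => (1 : ℝ)
  e_isBigO : e =O[l] fun _ => (1 : ℝ)
  e_pos : ∀ᶠ i in l, 0 < e i
  value_isBigO : (fun i => h i * e i - (1 - β * u i ^ 2 - 2 * β * h i ^ 2 * f (u i)))
    =O[l] fun i => h i ^ 3
  deriv_isBigO : (fun i => k * e i ^ 2 - (u i + h i ^ 2 * g (u i)) * (m + c * h i * e i))
    =O[l] fun i => h i ^ 3

/-- `a₀ + a₁ h + a₂ h ^ 2` and `e₀ + e₁ h + e₂ h ^ 2` solve the equations of `SaddleSystem`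
formally through order `h ^ 2`, on the branch where `e₀` is positive. -/
structure SaddleExpansion (k β m c f₀ g₀ a₀ a₁ a₂ e₀ e₁ e₂ : ℝ) : Prop where
  k_ne_zero : k ≠ 0
  e₀_pos : 0 < e₀
  value_zero : β * a₀ ^ 2 = 1
  value_one : -(2 * β * a₀ * a₁) = e₀
  value_two : -(β * (a₁ ^ 2 + 2 * a₀ * a₂)) - 2 * β * f₀ = e₁
  deriv_zero : k * e₀ ^ 2 = a₀ * m
  deriv_one : 2 * k * e₀ * e₁ = a₁ * m + a₀ * c * e₀
  deriv_two : k * (e₁ ^ 2 + 2 * e₀ * e₂) = m * (a₂ + g₀) + c * (a₁ * e₀ + a₀ * e₁)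

lemma SaddleExpansion.a₀_ne_zero {f₀ g₀ : ℝ}
    (H : SaddleExpansion k β m c f₀ g₀ a₀ a₁ a₂ e₀ e₁ e₂) : a₀ ≠ 0 := by
  simpa using right_ne_zero_of_mul_eq_one H.value_zero

lemma SaddleExpansion.value_isBigO {f₀ g₀ : ℝ}
    (H : SaddleExpansion k β m c f₀ g₀ a₀ a₁ a₂ e₀ e₁ e₂) (hh : Tendsto h l (𝓝 0)) :
    (fun i => h i * quadExpansion e₀ e₁ e₂ (h i) -
      (1 - β * quadExpansion a₀ a₁ a₂ (h i) ^ 2 - 2 * β * h i ^ 2 * f₀))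
      =O[l] fun i => h i ^ 3 := by
  have hbdd : (fun i => 2 * β * a₁ * a₂ + e₂ + β * a₂ ^ 2 * h i) =O[l] fun _ => (1 : ℝ) :=
    (tendsto_const_nhds.add (hh.const_mul _)).isBigO_one ℝ
  refine (isBigO_one_mul hbdd (isBigO_refl _ _)).congr_left fun i => ?_
  simp only [quadExpansion]
  linear_combination -H.value_zero + h i * H.value_one + h i ^ 2 * H.value_two

lemma SaddleExpansion.deriv_isBigO {f₀ g₀ : ℝ}
    (H : SaddleExpansion k β m c f₀ g₀ a₀ a₁ a₂ e₀ e₁ e₂) (hh : Tendsto h l (𝓝 0)) :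
    (fun i => k * quadExpansion e₀ e₁ e₂ (h i) ^ 2 -
      (m * (quadExpansion a₀ a₁ a₂ (h i) + h i ^ 2 * g₀) +
        c * h i * (quadExpansion a₀ a₁ a₂ (h i) * quadExpansion e₀ e₁ e₂ (h i))))
      =O[l] fun i => h i ^ 3 := by
  have hbdd : (fun i => 2 * k * e₁ * e₂ - c * (a₀ * e₂ + a₁ * e₁ + a₂ * e₀) +
      (k * e₂ ^ 2 - c * (a₁ * e₂ + a₂ * e₁)) * h i + -(c * a₂ * e₂) * h i ^ 2)
      =O[l] fun _ => (1 : ℝ) :=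
    ((tendsto_const_nhds.add (hh.const_mul _)).add ((hh.pow 2).const_mul _)).isBigO_one ℝ
  refine (isBigO_one_mul hbdd (isBigO_refl _ _)).congr_left fun i => ?_
  simp only [quadExpansion]
  linear_combination -H.deriv_zero - h i * H.deriv_one - h i ^ 2 * H.deriv_two

namespace SaddleSystem

variable (S : SaddleSystem l h u e k β m c f g)

include S

lemma comp_isBigO_one {φ : ℝ → ℝ} (hφ : Continuous φ) : (fun i => φ (u i)) =O[l] fun _ => (1 : ℝ) :=
  isBigO_one_comp_of_continuousAt (f := fun q => φ q.1) S.u_isBigO S.tendsto fun _ =>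
    (hφ.comp continuous_fst).continuousAt

lemma comp_sub_isBigO {φ : ℝ → ℝ} {a : ℝ} (hφ : DifferentiableAt ℝ φ a)
    (hu : (fun i => u i - a) =O[l] h) : (fun i => φ (u i) - φ a) =O[l] h :=
  (hφ.isBigO_sub.comp_tendsto
    (tendsto_sub_nhds_zero_iff.1 (hu.trans_tendsto S.tendsto))).trans hu

lemma deriv_zero_isBigO (hg : Continuous g) : (fun i => k * e i ^ 2 - m * u i) =O[l] h := by
  have hbdd : (fun i => h i * (g (u i) * m) + c * (u i * e i) + h i ^ 2 * (c * (g (u i) * e i)))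
      =O[l] fun _ => (1 : ℝ) := by
    have hh := S.tendsto.isBigO_one ℝ
    have hgu := S.comp_isBigO_one hg
    refine ((isBigO_one_mul hh (hgu.mul (isBigO_const_const m one_ne_zero l) |>.congr_right ?_)).add
      ((isBigO_one_mul S.u_isBigO S.e_isBigO).const_mul_left c)).add
      (isBigO_one_mul (by simpa using hh.pow 2) ((isBigO_one_mul hgu S.e_isBigO).const_mul_left c))
    simp
  have hpow : (fun i => h i ^ 3) =O[l] h := by
    simpa using isBigO_pow_of_le S.tendsto (n := 1) (p := 3) (by norm_num)
  refine ((S.deriv_isBigO.trans hpow).add (isBigO_one_mul hbdd (isBigO_refl h l))).congr_left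
    fun i => ?_
  ring

lemma u_sq_sub_isBigO (hf : Continuous f) (hβ : β * a₀ ^ 2 = 1) :
    (fun i => u i ^ 2 - a₀ ^ 2) =O[l] h := by
  have hpow : (fun i => h i ^ 3) =O[l] h := by
    simpa using isBigO_pow_of_le S.tendsto (n := 1) (p := 3) (by norm_num)
  have hbdd : (fun i => e i + 2 * β * (h i * f (u i))) =O[l] fun _ => (1 : ℝ) :=
    S.e_isBigO.add ((isBigO_one_mul (S.tendsto.isBigO_one ℝ)
      (S.comp_isBigO_one hf)).const_mul_left _)
  refine (isBigO_const_mul_left_iff (left_ne_zero_of_mul_eq_one hβ)).1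
    (((S.value_isBigO.trans hpow).sub
      (isBigO_one_mul hbdd (isBigO_refl h l))).congr_left fun i => ?_)
  linear_combination hβ

/- Since `k (k e ^ 2 - m u)` tends to `0`, `k m u` cannot approach `-k m a₀ < 0`: this singles out
the root `a₀` of `β u ^ 2 = 1`. -/
lemma u_sub_isBigO (hf : Continuous f) (hg : Continuous g) (hβ : β * a₀ ^ 2 = 1)
    (hk : k ≠ 0) (he₀ : 0 < e₀) (hd : k * e₀ ^ 2 = a₀ * m) :
    (fun i => u i - a₀) =O[l] h := by
  have hpos : 0 < k ^ 2 * e₀ ^ 2 := by positivity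
  have hr : Tendsto (fun i => k * (k * e i ^ 2 - m * u i)) l (𝓝 (k * 0)) :=
    ((S.deriv_zero_isBigO hg).trans_tendsto S.tendsto).const_mul k
  have hkm : k * m ≠ 0 := by
    refine mul_ne_zero hk fun hm => hpos.ne' ?_
    linear_combination k * hd + k * a₀ * hm
  refine (isBigO_sub_of_sq_sub_sq (δ := k ^ 2 * e₀ ^ 2 / 2 / |k * m|) (by positivity) ?_).trans
    (S.u_sq_sub_isBigO hf hβ)
  filter_upwards [hr.eventually_lt_const (show k * 0 < k ^ 2 * e₀ ^ 2 / 2 by linarith)] with i hi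
  rw [div_le_iff₀' (abs_pos.2 hkm), ← abs_mul]
  refine le_trans ?_ (le_abs_self _)
  linear_combination hi + k * hd + sq_nonneg (k * e i)

lemma e_sub_isBigO (hg : Continuous g) (hu : (fun i => u i - a₀) =O[l] h)
    (hk : k ≠ 0) (he₀ : 0 < e₀) (hd : k * e₀ ^ 2 = a₀ * m) :
    (fun i => e i - e₀) =O[l] h := by
  have hadd : ∀ᶠ i in l, e₀ ≤ |e i + e₀| :=
    S.e_pos.mono fun i hi => (le_add_of_nonneg_left hi.le).trans (le_abs_self _)
  refine (isBigO_sub_of_sq_sub_sq he₀ hadd).trans ((isBigO_const_mul_left_iff hk).1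
    (((S.deriv_zero_isBigO hg).add (hu.const_mul_left m)).congr_left fun i => ?_))
  linear_combination hd

section Bootstrap

variable (H : SaddleExpansion k β m c (f a₀) (g a₀) a₀ a₁ a₂ e₀ e₁ e₂)
  (hf : Differentiable ℝ f) (hg : Differentiable ℝ g)

include H hf

lemma u_sub_quadExpansion_isBigO_succ {n : ℕ} (hn : n ≤ 2) (hu : (fun i => u i - a₀) =O[l] h)
    (he : (fun i => e i - quadExpansion e₀ e₁ e₂ (h i)) =O[l] fun i => h i ^ n) :
    (fun i => u i - quadExpansion a₀ a₁ a₂ (h i)) =O[l] fun i => h i ^ (n + 1) := by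
  have hpow := isBigO_pow_of_le S.tendsto (show n + 1 ≤ 3 by lia)
  have hhe : (fun i => h i * (e i - quadExpansion e₀ e₁ e₂ (h i))) =O[l] fun i => h i ^ (n + 1) :=
    ((isBigO_refl h l).mul he).congr_right fun i => (pow_succ' _ _).symm
  have hhf : (fun i => h i ^ 2 * (f (u i) - f a₀)) =O[l] fun i => h i ^ 3 :=
    ((isBigO_refl (fun i => h i ^ 2) l).mul (S.comp_sub_isBigO hf.differentiableAt hu)).congr_right
      fun i => (pow_succ _ _).symm
  refine (isBigO_sub_of_tendsto_of_sq_sub_sq H.a₀_ne_zero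
    (tendsto_sub_nhds_zero_iff.1 (hu.trans_tendsto S.tendsto))
    (tendsto_quadExpansion a₀ a₁ a₂ S.tendsto)).trans ?_
  refine (isBigO_const_mul_left_iff (left_ne_zero_of_mul_eq_one H.value_zero)).1
    (((((S.value_isBigO.sub (H.value_isBigO S.tendsto)).sub
      (hhf.const_mul_left (2 * β))).trans hpow).sub hhe).congr_left fun i => ?_)
  ring

omit hf
include hg

lemma e_sub_quadExpansion_isBigO_succ {n : ℕ} (hn : n ≤ 2) (hu₁ : (fun i => u i - a₀) =O[l] h)
    (he₁ : (fun i => e i - e₀) =O[l] h)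
    (hu : (fun i => u i - quadExpansion a₀ a₁ a₂ (h i)) =O[l] fun i => h i ^ (n + 1))
    (he : (fun i => e i - quadExpansion e₀ e₁ e₂ (h i)) =O[l] fun i => h i ^ n) :
    (fun i => e i - quadExpansion e₀ e₁ e₂ (h i)) =O[l] fun i => h i ^ (n + 1) := by
  have hpow := isBigO_pow_of_le S.tendsto (show n + 1 ≤ 3 by lia)
  have hue : (fun i => h i * (u i * (e i - quadExpansion e₀ e₁ e₂ (h i)))) =O[l]
      fun i => h i ^ (n + 1) :=
    ((isBigO_refl h l).mul (isBigO_one_mul S.u_isBigO he)).congr_right fun i => (pow_succ' _ _).symm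
  have hVu : (fun i => h i * quadExpansion e₀ e₁ e₂ (h i) *
      (u i - quadExpansion a₀ a₁ a₂ (h i))) =O[l] fun i => h i ^ (n + 1) :=
    isBigO_one_mul ((S.tendsto.mul (tendsto_quadExpansion e₀ e₁ e₂ S.tendsto)).isBigO_one ℝ) hu
  have hhg : (fun i => h i ^ 2 * (g (u i) - g a₀)) =O[l] fun i => h i ^ 3 :=
    ((isBigO_refl (fun i => h i ^ 2) l).mul (S.comp_sub_isBigO hg.differentiableAt hu₁)).congr_right
      fun i => (pow_succ _ _).symm
  have hge : (fun i => g (u i) * e i * h i ^ 3) =O[l] fun i => h i ^ 3 :=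
    isBigO_one_mul (isBigO_one_mul (S.comp_isBigO_one hg.continuous) S.e_isBigO) (isBigO_refl _ _)
  refine (isBigO_sub_of_tendsto_of_sq_sub_sq H.e₀_pos.ne'
    (tendsto_sub_nhds_zero_iff.1 (he₁.trans_tendsto S.tendsto))
    (tendsto_quadExpansion e₀ e₁ e₂ S.tendsto)).trans ?_
  refine (isBigO_const_mul_left_iff H.k_ne_zero).1
    ((((((S.deriv_isBigO.sub (H.deriv_isBigO S.tendsto)).add (hhg.const_mul_left m)).add
      (hge.const_mul_left c)).trans hpow).add ((hu.const_mul_left m).add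
        ((hue.add hVu).const_mul_left c))).congr_left fun i => ?_)
  ring

include hf

lemma tendsto_u : Tendsto u l (𝓝 a₀) :=
  tendsto_sub_nhds_zero_iff.1 <| (S.u_sub_isBigO hf.continuous hg.continuous H.value_zero
    H.k_ne_zero H.e₀_pos H.deriv_zero).trans_tendsto S.tendsto

theorem e_sub_quadExpansion_isBigO :
    (fun i => e i - quadExpansion e₀ e₁ e₂ (h i)) =O[l] fun i => h i ^ 3 := by
  have hu : (fun i => u i - a₀) =O[l] h := S.u_sub_isBigO hf.continuous hg.continuous
    H.value_zero H.k_ne_zero H.e₀_pos H.deriv_zero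
  have he : (fun i => e i - e₀) =O[l] h :=
    S.e_sub_isBigO hg.continuous hu H.k_ne_zero H.e₀_pos H.deriv_zero
  have succ {n : ℕ} (hn : n ≤ 2)
      (hen : (fun i => e i - quadExpansion e₀ e₁ e₂ (h i)) =O[l] fun i => h i ^ n) :
      (fun i => e i - quadExpansion e₀ e₁ e₂ (h i)) =O[l] fun i => h i ^ (n + 1) :=
    S.e_sub_quadExpansion_isBigO_succ H hg hn hu he
      (S.u_sub_quadExpansion_isBigO_succ H hf hn hu hen) hen
  refine succ le_rfl (succ one_le_two ?_)
  simpa using he.sub (quadExpansion_sub_isBigO e₀ e₁ e₂ S.tendsto)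

end Bootstrap

end SaddleSystem

end SaddleSystem

section SaddlePath

lemma abs_le_of_mem_connectedComponentIn_zero {F : Set ℝ} {x R : ℝ}
    (hx : x ∈ connectedComponentIn F 0) (hR : 0 ≤ R) (hRF : R ∉ F) (hRF' : -R ∉ F) : |x| ≤ R := by
  have h0 : (0 : ℝ) ∈ connectedComponentIn F 0 :=
    mem_connectedComponentIn (connectedComponentIn_nonempty_iff.1 ⟨x, hx⟩)
  have hord : (connectedComponentIn F 0).OrdConnected :=
    isPreconnected_connectedComponentIn.ordConnected
  by_contra! hlt
  obtain hlt | hlt := lt_abs.1 hlt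
  · exact hRF (connectedComponentIn_subset _ _ (hord.out h0 hx ⟨hR, hlt.le⟩))
  · exact hRF' (connectedComponentIn_subset _ _ (hord.out hx h0 ⟨by linarith, by linarith⟩))

lemma betaT_pos {κ ξ t : ℝ} (hκ : κ ≠ 0) (hξ : ξ ≠ 0) (ht : 0 < t) : 0 < betaT κ ξ t := by
  obtain hneg | hpos := hκ.lt_or_gt
  · have hexp : 1 < Real.exp (-(κ * t)) := Real.one_lt_exp_iff.2 (by nlinarith)
    refine div_pos_of_neg_of_neg (mul_neg_of_pos_of_neg (by positivity) ?_) ?_ <;> linarith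
  · have hexp : Real.exp (-(κ * t)) < 1 := Real.exp_lt_one_iff.2 (by nlinarith)
    exact div_pos (mul_pos (by positivity) (by linarith)) (by linarith)

variable {κ θ ρ ξ v t k β : ℝ} {ι : Type*} {l : Filter ι} {u s h : ι → ℝ}

lemma hestEReal_sub_isBigO (hu : u =O[l] fun _ => (1 : ℝ)) (hs : Tendsto s l (𝓝 0)) :
    (fun i => hestEReal β κ ρ ξ (u i) (s i) - (1 - β * u i ^ 2 - 2 * β * s i * B1hat ρ ξ (u i)))
      =O[l] fun i => s i ^ 2 := by
  refine ((hestBReal_sub_isBigO (κ := κ) (ρ := ρ) (ξ := ξ) hu hs).const_mul_left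
    (-(2 * β))).congr_left fun i => ?_
  rw [hestEReal]
  ring

lemma tendsto_hestEReal_sub (hu : u =O[l] fun _ => (1 : ℝ)) (hs : Tendsto s l (𝓝 0)) :
    Tendsto (fun i => hestEReal β κ ρ ξ (u i) (s i) - (1 - β * u i ^ 2)) l (𝓝 0) := by
  have hB1 : (fun i => B1hat ρ ξ (u i)) =O[l] fun _ => (1 : ℝ) :=
    isBigO_one_comp_of_continuousAt (f := fun q => B1hat ρ ξ q.1) hu hs fun _ => by
      unfold B1hat; fun_prop
  have hsB1 : Tendsto (fun i => B1hat ρ ξ (u i) * s i) l (𝓝 0) :=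
    (isBigO_one_mul hB1 (isBigO_refl s l)).trans_tendsto hs
  have hrem := (hestEReal_sub_isBigO (κ := κ) (ρ := ρ) (ξ := ξ) (β := β) hu hs).trans_tendsto
    (by simpa using hs.pow 2)
  simpa using (hrem.sub (hsB1.const_mul (2 * β))).congr fun i => by ring

lemma tendsto_deriv_hestBReal_sub (hu : u =O[l] fun _ => (1 : ℝ)) (hs : Tendsto s l (𝓝 0)) :
    Tendsto (fun i => deriv (fun x => hestBReal κ ρ ξ x (s i)) (u i) - u i) l (𝓝 0) := by
  have hB1 : (fun i => B1hat' ρ ξ (u i)) =O[l] fun _ => (1 : ℝ) :=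
    isBigO_one_comp_of_continuousAt (f := fun q => B1hat' ρ ξ q.1) hu hs fun _ => by
      unfold B1hat'; fun_prop
  have hsB1 : Tendsto (fun i => B1hat' ρ ξ (u i) * s i) l (𝓝 0) :=
    (isBigO_one_mul hB1 (isBigO_refl s l)).trans_tendsto hs
  have hrem := (deriv_hestBReal_sub_isBigO (κ := κ) (ρ := ρ) (ξ := ξ) hu hs).trans_tendsto
    (by simpa using hs.pow 2)
  simpa using (hrem.add hsB1).congr fun i => by ring

/- In the limit `E = 1 - β u ^ 2` and `E' = -2 β u`, which have no common zero. -/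
lemma eventually_deriv_hestEReal_ne_zero (hu : u =O[l] fun _ => (1 : ℝ))
    (hs : Tendsto s l (𝓝 0)) :
    ∀ᶠ i in l, hestEReal β κ ρ ξ (u i) (s i) = 0 →
      deriv (fun x => hestEReal β κ ρ ξ x (s i)) (u i) ≠ 0 := by
  have hE := tendsto_hestEReal_sub (κ := κ) (ρ := ρ) (ξ := ξ) (β := β) hu hs
  have hB := (isBigO_one_mul hu (isBigO_refl _ l)).trans_tendsto
    (tendsto_deriv_hestBReal_sub (κ := κ) (ρ := ρ) (ξ := ξ) hu hs)
  have hsum := hE.add (hB.const_mul β)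
  simp only [mul_zero, add_zero] at hsum
  filter_upwards [hsum.eventually_ne (neg_ne_zero.2 one_ne_zero).symm,
    eventually_hestDen_pos (κ := κ) (ρ := ρ) (ξ := ξ) hu hs] with i hi hDen hE0 hE'
  rw [(hasDerivAt_hestEReal β hDen).deriv] at hE'
  refine hi ?_
  linear_combination hE0 - u i / 2 * hE'

lemma eventually_notMem_interior (hκ : κ ≠ 0) (hθ : θ ≠ 0) (hξ : ξ ≠ 0) {R : ℝ}
    (hR : 1 < betaT κ ξ t * R ^ 2) :
    ∀ᶠ s in 𝓝[>] (0 : ℝ), R ∉ interior {x : ℝ | (hestLambda κ θ ξ v ρ t (s ^ 2) x).im = 0} := by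
  have hu : (fun _ => R) =O[𝓝[>] (0 : ℝ)] fun _ => (1 : ℝ) := isBigO_const_const R one_ne_zero _
  have hs : Tendsto id (𝓝[>] (0 : ℝ)) (𝓝 0) := nhdsWithin_le_nhds
  have hE := (tendsto_hestEReal_sub (κ := κ) (ρ := ρ) (β := betaT κ ξ t) (ξ := ξ)
    hu hs).eventually_lt_const (show 0 < betaT κ ξ t * R ^ 2 - 1 by linarith)
  filter_upwards [hE, eventually_hestDen_pos (κ := κ) (ρ := ρ) (ξ := ξ) hu hs,
    eventually_abs_hestHalfExpSq_lt (κ := κ) (ρ := ρ) (ξ := ξ) hu hs,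
    self_mem_nhdsWithin] with s hneg hDen hX hs0 hmem
  have := hestEReal_nonneg_of_mem_interior hκ hθ hξ hs0 hX hDen hmem
  simp only [id] at hneg
  linarith

/-- A family of saddlepoints `u` of level `k`, at maturities `τ = h ^ 4` tending to `0`. -/
structure SaddlePath (κ θ ξ v ρ t k : ℝ) (l : Filter ι) (u h : ι → ℝ) : Prop where
  tendsto : Tendsto h l (𝓝[>] 0)
  mem_hestDom : ∀ᶠ i in l, u i ∈ hestDom κ θ ξ v ρ t ((h i ^ 2) ^ 2)
  deriv_eq : ∀ᶠ i in l, deriv (hestLambda κ θ ξ v ρ t ((h i ^ 2) ^ 2)) (u i) = k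

namespace SaddlePath

variable (P : SaddlePath κ θ ξ v ρ t k l u h)

include P

lemma pos : ∀ᶠ i in l, 0 < h i := P.tendsto.eventually self_mem_nhdsWithin

lemma tendsto_zero : Tendsto h l (𝓝 0) := P.tendsto.mono_right nhdsWithin_le_nhds

lemma tendsto_sq_zero : Tendsto (fun i => h i ^ 2) l (𝓝 0) := by
  simpa using P.tendsto_zero.pow 2

lemma tendsto_sq : Tendsto (fun i => h i ^ 2) l (𝓝[>] 0) :=
  tendsto_nhdsWithin_iff.2 ⟨P.tendsto_sq_zero, P.pos.mono fun _ hi => pow_pos hi 2⟩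

lemma isBigO_one (hκ : κ ≠ 0) (hθ : θ ≠ 0) (hξ : ξ ≠ 0) (ht : 0 < t) :
    u =O[l] fun _ => (1 : ℝ) := by
  have hβ := betaT_pos hκ hξ ht
  set R := 2 / √(betaT κ ξ t)
  have hR : 1 < betaT κ ξ t * R ^ 2 := by
    rw [div_pow, Real.sq_sqrt hβ.le, mul_div_cancel₀ _ hβ.ne']; norm_num
  refine .of_bound R ?_
  filter_upwards [P.mem_hestDom,
    P.tendsto_sq.eventually (eventually_notMem_interior (v := v) (ρ := ρ) hκ hθ hξ hR),
    P.tendsto_sq.eventually (eventually_notMem_interior (v := v) (ρ := ρ) hκ hθ hξ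
      (R := -R) (by rwa [neg_sq]))] with i hmem hRF hRF'
  simpa using abs_le_of_mem_connectedComponentIn_zero hmem (by positivity) hRF hRF'

lemma hestEReal_pos (hκ : κ ≠ 0) (hθ : θ ≠ 0) (hξ : ξ ≠ 0) (hu : u =O[l] fun _ => (1 : ℝ)) :
    ∀ᶠ i in l, 0 < hestEReal (betaT κ ξ t) κ ρ ξ (u i) (h i ^ 2) := by
  filter_upwards [P.pos, P.mem_hestDom,
    eventually_abs_hestHalfExpSq_lt (κ := κ) (ρ := ρ) (ξ := ξ) hu P.tendsto_sq_zero,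
    eventually_hestDen_pos (κ := κ) (ρ := ρ) (ξ := ξ) hu P.tendsto_sq_zero,
    eventually_deriv_hestEReal_ne_zero (κ := κ) (ρ := ρ) (ξ := ξ) hu P.tendsto_sq_zero]
    with i hi hmem hX hDen hE'
  exact hestEReal_pos_of_mem_interior hκ hθ hξ (pow_pos hi 2) hX hDen
    (connectedComponentIn_subset _ _ hmem) hE'

/- The equation `Λ' = k` multiplied by `(E / h) ^ 2`. -/
lemma mul_sq_eq (hκ : κ ≠ 0) (hθ : θ ≠ 0) (hξ : ξ ≠ 0) (hk : k ≠ 0)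
    (hu : u =O[l] fun _ => (1 : ℝ)) :
    ∀ᶠ i in l, k * (hestEReal (betaT κ ξ t) κ ρ ξ (u i) (h i ^ 2) / h i) ^ 2 =
      deriv (fun x => hestAReal κ θ ρ ξ x (h i ^ 2)) (u i) *
          hestEReal (betaT κ ξ t) κ ρ ξ (u i) (h i ^ 2) ^ 2 +
        deriv (fun x => hestBReal κ ρ ξ x (h i ^ 2)) (u i) * (v * Real.exp (-(κ * t)) +
          4 * κ * θ * betaT κ ξ t / ξ ^ 2 * hestEReal (betaT κ ξ t) κ ρ ξ (u i) (h i ^ 2)) := by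
  filter_upwards [P.pos, P.deriv_eq, P.hestEReal_pos hκ hθ hξ hu,
    eventually_abs_hestHalfExpSq_lt (κ := κ) (ρ := ρ) (ξ := ξ) hu P.tendsto_sq_zero,
    eventually_hestDen_pos (κ := κ) (ρ := ρ) (ξ := ξ) hu P.tendsto_sq_zero]
    with i hi hder hE hX hDen
  have heq := eq_of_deriv_hestLambda_eq hκ hξ (pow_pos hi 2) hk hX hDen hE hder
  generalize hestEReal (betaT κ ξ t) κ ρ ξ (u i) (h i ^ 2) = E at *
  rw [heq]
  field_simp

lemma hestEReal_isBigO_one (hu : u =O[l] fun _ => (1 : ℝ)) :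
    (fun i => hestEReal (betaT κ ξ t) κ ρ ξ (u i) (h i ^ 2)) =O[l] fun _ => (1 : ℝ) := by
  have husq : (fun i => u i ^ 2) =O[l] fun _ => (1 : ℝ) := by simpa using hu.pow 2
  have hE := tendsto_hestEReal_sub (κ := κ) (ρ := ρ) (ξ := ξ) (β := betaT κ ξ t) hu
    P.tendsto_sq_zero
  refine ((hE.isBigO_one ℝ).add ((isBigO_const_const 1 one_ne_zero l).sub
    (husq.const_mul_left (betaT κ ξ t)))).congr_left fun i => ?_
  ring

lemma hestEReal_div_isBigO_one (hκ : κ ≠ 0) (hθ : θ ≠ 0) (hξ : ξ ≠ 0) (hk : k ≠ 0)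
    (hu : u =O[l] fun _ => (1 : ℝ)) :
    (fun i => hestEReal (betaT κ ξ t) κ ρ ξ (u i) (h i ^ 2) / h i) =O[l] fun _ => (1 : ℝ) := by
  have hE := P.hestEReal_isBigO_one hu
  have hB : (fun i => deriv (fun x => hestBReal κ ρ ξ x (h i ^ 2)) (u i))
      =O[l] fun _ => (1 : ℝ) :=
    (((tendsto_deriv_hestBReal_sub hu P.tendsto_sq_zero).isBigO_one ℝ).add hu).congr_left
      fun i => by ring
  have hEsq : (fun i => hestEReal (betaT κ ξ t) κ ρ ξ (u i) (h i ^ 2) ^ 2)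
      =O[l] fun _ => (1 : ℝ) := by simpa using hE.pow 2
  have hA := (deriv_hestAReal_isBigO (κ := κ) (θ := θ) (ρ := ρ) (ξ := ξ) hu
    P.tendsto_sq_zero).trans (P.tendsto_sq_zero.isBigO_one ℝ)
  refine .of_pow two_ne_zero ((isBigO_const_mul_left_iff hk).1 ?_)
  exact ((isBigO_one_mul hA hEsq).add (isBigO_one_mul hB
    ((isBigO_const_const _ one_ne_zero l).add (hE.const_mul_left _)))).congr'
      ((P.mul_sq_eq hκ hθ hξ hk hu).mono fun i hi => hi.symm) (.of_forall fun i => by simp)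

theorem saddleSystem (hκ : κ ≠ 0) (hθ : θ ≠ 0) (hξ : ξ ≠ 0) (hk : k ≠ 0) (ht : 0 < t) :
    SaddleSystem l h u (fun i => hestEReal (betaT κ ξ t) κ ρ ξ (u i) (h i ^ 2) / h i) k
      (betaT κ ξ t) (v * Real.exp (-(κ * t))) (4 * κ * θ * betaT κ ξ t / ξ ^ 2)
      (B1hat ρ ξ) (B1hat' ρ ξ) := by
  have hu := P.isBigO_one hκ hθ hξ ht
  have he := P.hestEReal_div_isBigO_one hκ hθ hξ hk hu
  have hpow := isBigO_pow_of_le P.tendsto_zero (show 3 ≤ 4 by norm_num)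
  have hE := P.hestEReal_isBigO_one hu
  have hA := deriv_hestAReal_isBigO (κ := κ) (θ := θ) (ρ := ρ) (ξ := ξ) hu P.tendsto_sq_zero
  have hB := (deriv_hestBReal_sub_isBigO (κ := κ) (ρ := ρ) (ξ := ξ) hu P.tendsto_sq_zero)
  refine ⟨P.tendsto_zero, hu, he, ?_, ?_, ?_⟩
  · filter_upwards [P.pos, P.hestEReal_pos hκ hθ hξ hu] with i hi hEi
    exact div_pos hEi hi
  · refine .trans (.congr' (hestEReal_sub_isBigO (κ := κ) (ρ := ρ) (ξ := ξ) (β := betaT κ ξ t) hu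
      P.tendsto_sq_zero) ?_ (.of_forall fun i => by ring)) hpow
    filter_upwards [P.pos] with i hi
    rw [mul_div_cancel₀ _ hi.ne']
  · have hAe := hA.mul (isBigO_one_mul he (isBigO_one_mul he (isBigO_refl (fun i => h i ^ 2) l)))
    have hBm := isBigO_one_mul ((isBigO_const_const (v * Real.exp (-(κ * t))) one_ne_zero l).add
      (hE.const_mul_left (4 * κ * θ * betaT κ ξ t / ξ ^ 2))) hB
    refine .trans (.congr' (hAe.add (hBm.congr_right fun i => pow_two _)) ?_
      (.of_forall fun i => by ring)) hpow
    filter_upwards [P.pos, P.mul_sq_eq hκ hθ hξ hk hu] with i hi heq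
    have hmul := mul_div_cancel₀ (hestEReal (betaT κ ξ t) κ ρ ξ (u i) (h i ^ 2)) hi.ne'
    rw [heq]
    generalize hestEReal (betaT κ ξ t) κ ρ ξ (u i) (h i ^ 2) / h i = e at *
    rw [← hmul]
    ring

end SaddlePath

/- If `ρ ^ 2 = 1` the constant term of `hestDiscr` in `s` vanishes, and the linear one does too when
`ξ = 2 κ ρ`. -/
lemma eventually_hestDiscr_ne_zero {a : ℝ} (hκ : κ ≠ 0) (hξ : ξ ≠ 0) (ha : a ≠ 0)
    (hu : Tendsto u l (𝓝 a)) (hs : Tendsto s l (𝓝[≠] 0)) :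
    ∀ᶠ i in l, hestDiscr κ ρ ξ (u i) (s i) ≠ 0 := by
  have hs0 : Tendsto s l (𝓝 0) := hs.mono_right nhdsWithin_le_nhds
  have hsne : ∀ᶠ i in l, s i ≠ 0 := hs.eventually self_mem_nhdsWithin
  unfold hestDiscr hestDrift
  by_cases hρ : ρ ^ 2 = 1
  · have hfac (i : ι) : ((κ * s i - ρ * ξ * u i) ^ 2 + u i * (s i - u i) * ξ ^ 2) / 4 =
        s i * (κ ^ 2 * s i + u i * (ξ * (ξ - 2 * κ * ρ))) / 4 := by
      linear_combination ξ ^ 2 * u i ^ 2 / 4 * hρ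
    simp only [hfac]
    by_cases hξρ : ξ - 2 * κ * ρ = 0
    · filter_upwards [hsne] with i hi
      simp [hξρ, hκ, hi]
    · have hlim := (hs0.const_mul (κ ^ 2)).add (hu.mul_const (ξ * (ξ - 2 * κ * ρ)))
      filter_upwards [hsne, hlim.eventually_ne (b₂ := 0) (by simp [ha, hξ, hξρ])] with i hi hne
      exact div_ne_zero (mul_ne_zero hi hne) four_ne_zero
  · have hlim := ((((hs0.const_mul κ).sub (hu.const_mul (ρ * ξ))).pow 2).add
      ((hu.mul (hs0.sub hu)).mul_const (ξ ^ 2))).div_const 4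
    refine hlim.eventually_ne ?_
    have hval : ((κ * 0 - ρ * ξ * a) ^ 2 + a * (0 - a) * ξ ^ 2) / 4 =
        (ρ ^ 2 - 1) * ξ ^ 2 * a ^ 2 / 4 := by ring
    rw [hval]
    have := sub_ne_zero.2 hρ
    positivity

lemma eventually_hestRegular {a : ℝ} (hκ : κ ≠ 0) (hξ : ξ ≠ 0) (ha : a ≠ 0)
    (hu : Tendsto u l (𝓝 a)) (hs : Tendsto s l (𝓝[≠] 0)) :
    ∀ᶠ i in l, HestRegular κ ρ ξ (u i) (s i) := by
  have hs0 : Tendsto s l (𝓝 0) := hs.mono_right nhdsWithin_le_nhds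
  have hu1 := hu.isBigO_one ℝ
  filter_upwards [hu.eventually_ne ha, (hu.sub hs0).eventually_ne (by simpa using ha),
    hs.eventually self_mem_nhdsWithin, eventually_hestDiscr_ne_zero (ρ := ρ) hκ hξ ha hu hs,
    eventually_abs_hestHalfExpSq_lt hu1 hs0, eventually_hestDen_pos hu1 hs0]
    with i hu0 hus hsi hdiscr hX hDen
  exact ⟨hu0, sub_ne_zero.1 hus, mul_ne_zero (pow_ne_zero 2 hsi) hdiscr, hX, hDen⟩

end SaddlePath

section Coefficients

lemma sgn'_cases (k : ℝ) : sgn' k = 1 ∧ k = |k| ∨ sgn' k = -1 ∧ k = -|k| := by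
  rw [sgn']
  split_ifs with hk
  · exact .inl ⟨rfl, (abs_of_nonneg hk).symm⟩
  · exact .inr ⟨rfl, by rw [abs_of_neg (not_le.1 hk), neg_neg]⟩

lemma rpow_quarter_sq {y : ℝ} (hy : 0 ≤ y) : (y ^ ((1 : ℝ) / 4)) ^ 2 = √y := by
  rw [Real.sqrt_eq_rpow, ← Real.rpow_natCast, ← Real.rpow_mul hy]
  norm_num

variable {κ θ ρ ξ v t k : ℝ}

lemma coefE0_eq (hβ : 0 < betaT κ ξ t) :
    coefE0 κ θ ξ v ρ t k =
      √v * Real.exp (-(κ * t) / 2) / (√|k| * betaT κ ξ t ^ ((1 : ℝ) / 4)) := by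
  have hA0 : coefA0 κ θ ξ v ρ t k ≠ 0 := by
    rw [coefA0]
    refine div_ne_zero ?_ (Real.sqrt_pos.2 hβ).ne'
    rcases sgn'_cases k with ⟨hσ, -⟩ | ⟨hσ, -⟩ <;> simp [hσ]
  rw [coefE0, coefA1]
  field_simp

theorem saddleExpansion_coef (hβ : 0 < betaT κ ξ t) (hξ : ξ ≠ 0) (hv : 0 < v) (hk : k ≠ 0) :
    SaddleExpansion k (betaT κ ξ t) (v * Real.exp (-(κ * t)))
      (4 * κ * θ * betaT κ ξ t / ξ ^ 2) (B1hat ρ ξ (coefA0 κ θ ξ v ρ t k))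
      (B1hat' ρ ξ (coefA0 κ θ ξ v ρ t k)) (coefA0 κ θ ξ v ρ t k) (coefA1 κ θ ξ v ρ t k)
      (coefA2 κ θ ξ v ρ t k) (coefE0 κ θ ξ v ρ t k) (coefE1 κ θ ξ v ρ t k)
      (coefE2 κ θ ξ v ρ t k) := by
  obtain ⟨b, hb0, hb⟩ : ∃ b : ℝ, 0 < b ∧ betaT κ ξ t ^ ((1 : ℝ) / 4) = b :=
    ⟨_, Real.rpow_pos_of_pos hβ _, rfl⟩
  have hsb : √(betaT κ ξ t) = b ^ 2 := by rw [← rpow_quarter_sq hβ.le, hb]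
  have hb4 : betaT κ ξ t = b ^ 4 := by rw [← Real.sq_sqrt hβ.le, hsb, ← pow_mul]
  obtain ⟨x, hx0, hx⟩ : ∃ x : ℝ, 0 < x ∧ Real.exp (-(κ * t) / 2) = x := ⟨_, Real.exp_pos _, rfl⟩
  have hx2 : Real.exp (-(κ * t)) = x ^ 2 := by rw [← hx, ← Real.exp_nat_mul]; ring_nf
  have hx2' : Real.exp (κ * t) = (x ^ 2)⁻¹ := by rw [← hx2, Real.exp_neg, inv_inv]
  obtain ⟨p, hp0, hp⟩ : ∃ p : ℝ, 0 < p ∧ √v = p := ⟨_, Real.sqrt_pos.2 hv, rfl⟩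
  have hvp : v = p ^ 2 := by rw [← hp, Real.sq_sqrt hv.le]
  obtain ⟨q, hq0, hq⟩ : ∃ q : ℝ, 0 < q ∧ √|k| = q := ⟨_, Real.sqrt_pos.2 (abs_pos.2 hk), rfl⟩
  have hkq : |k| = q ^ 2 := by rw [← hq, Real.sq_sqrt (abs_nonneg _)]
  have hσ := sgn'_cases k
  have hA0 : coefA0 κ θ ξ v ρ t k = sgn' k / b ^ 2 := by rw [coefA0, hsb]
  rw [coefE0_eq hβ, coefE1, coefE2, coefR, coefA3, coefA2, coefA1, hsb, hq, hkq, hx2, hx2', hx, hp,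
    hb, hb4]
  generalize B1hat ρ ξ (coefA0 κ θ ξ v ρ t k) = f
  generalize B1hat' ρ ξ (coefA0 κ θ ξ v ρ t k) = g
  rw [hA0, hvp]
  rw [hkq] at hσ
  refine ⟨hk, by positivity, ?_, ?_, ?_, ?_, ?_, ?_⟩ <;>
    rcases hσ with ⟨hσ, hk'⟩ | ⟨hσ, hk'⟩ <;> rw [hσ] <;> try rw [hk']
  all_goals field_simp
  all_goals ring

end Coefficients

lemma tendsto_rpow_quarter_nhdsGT_zero :
    Tendsto (fun τ : ℝ => τ ^ ((1 : ℝ) / 4)) (𝓝[>] 0) (𝓝[>] 0) := by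
  refine tendsto_nhdsWithin_iff.2 ⟨?_, eventually_mem_nhdsWithin.mono fun τ hτ =>
    Real.rpow_pos_of_pos hτ _⟩
  have hcont := (Real.continuousAt_rpow_const 0 ((1 : ℝ) / 4) (.inr (by norm_num))).tendsto
  rw [Real.zero_rpow (by norm_num)] at hcont
  exact hcont.mono_left nhdsWithin_le_nhds

theorem SaddlePath.hestB_expansion {κ θ ρ ξ v t k : ℝ} {ι : Type*} {l : Filter ι} {u h : ι → ℝ}
    (P : SaddlePath κ θ ξ v ρ t k l u h) (hκ : κ ≠ 0) (hθ : θ ≠ 0) (hξ : ξ ≠ 0) (hv : 0 < v)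
    (ht : 0 < t) (hk : k ≠ 0) :
    (fun i => (1 - 2 * (betaT κ ξ t : ℂ) * hestB κ ρ ξ (u i / (h i ^ 2 : ℝ)) ((h i ^ 2) ^ 2)) *
        ((h i)⁻¹ : ℝ) - (quadExpansion (coefE0 κ θ ξ v ρ t k) (coefE1 κ θ ξ v ρ t k)
          (coefE2 κ θ ξ v ρ t k) (h i) : ℝ))
      =O[l] fun i => h i ^ 3 := by
  have S := P.saddleSystem hκ hθ hξ hk ht
  have H := saddleExpansion_coef (θ := θ) (ρ := ρ) (betaT_pos hκ hξ ht) hξ hv hk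
  have hf : Differentiable ℝ (B1hat ρ ξ) := fun x => (hasDerivAt_B1hat ρ ξ x).differentiableAt
  have hg : Differentiable ℝ (B1hat' ρ ξ) := by unfold B1hat'; fun_prop
  have hreg := eventually_hestRegular (ρ := ρ) hκ hξ H.a₀_ne_zero (S.tendsto_u H hf hg)
    (P.tendsto_sq.mono_right (nhdsGT_le_nhdsNE 0))
  refine .congr' (Complex.isBigO_ofReal_left.2 (S.e_sub_quadExpansion_isBigO H hf hg)) ?_ .rfl
  filter_upwards [P.pos, hreg] with i hi hreg
  rw [hestB_eq_hestBReal hξ (pow_pos hi 2).ne' hreg, hestEReal, div_eq_mul_inv]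
  push_cast
  ring

theorem stmt14_general (κ θ ξ v ρ t : ℝ) (hκ : κ ≠ 0) (hθ : θ ≠ 0) (hξ : ξ ≠ 0)
    (hv : 0 < v) (ht : 0 < t) (k : ℝ) (hk : k ≠ 0) (ustar : ℝ → ℝ)
    (hustar : ∀ᶠ τ in 𝓝[>] (0 : ℝ), ustar τ ∈ hestDom κ θ ξ v ρ t τ ∧
      deriv (hestLambda κ θ ξ v ρ t τ) (ustar τ) = (k : ℂ)) :
    (fun τ : ℝ =>
        (1 - 2 * (betaT κ ξ t : ℂ) *
            hestB κ ρ ξ ((ustar τ : ℝ) / ((Real.sqrt τ : ℝ) : ℂ)) τ) *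
          ((τ ^ (-(1 : ℝ) / 4) : ℝ) : ℂ) -
        (((coefE0 κ θ ξ v ρ t k : ℝ) : ℂ) +
          ((coefE1 κ θ ξ v ρ t k : ℝ) : ℂ) * ((τ ^ ((1 : ℝ) / 4) : ℝ) : ℂ) +
          ((coefE2 κ θ ξ v ρ t k : ℝ) : ℂ) * ((τ ^ ((1 : ℝ) / 2) : ℝ) : ℂ)))
      =O[𝓝[>] (0 : ℝ)] fun τ : ℝ => τ ^ ((3 : ℝ) / 4) := by
  have hpos : ∀ᶠ τ in 𝓝[>] (0 : ℝ), 0 < τ := self_mem_nhdsWithin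
  have hsqrt {τ : ℝ} (hτ : 0 < τ) : √τ = (τ ^ ((1 : ℝ) / 4)) ^ 2 := (rpow_quarter_sq hτ.le).symm
  have hsq {τ : ℝ} (hτ : 0 < τ) : ((τ ^ ((1 : ℝ) / 4)) ^ 2) ^ 2 = τ := by
    rw [← hsqrt hτ, Real.sq_sqrt hτ.le]
  have P : SaddlePath κ θ ξ v ρ t k (𝓝[>] 0) ustar fun τ => τ ^ ((1 : ℝ) / 4) := by
    refine ⟨tendsto_rpow_quarter_nhdsGT_zero, ?_, ?_⟩ <;>
      filter_upwards [hustar, hpos] with τ h hτ <;> rw [hsq hτ]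
    exacts [h.1, h.2]
  refine (P.hestB_expansion hκ hθ hξ hv ht hk).congr' ?_ ?_ <;> filter_upwards [hpos] with τ hτ
  · rw [hsq hτ, ← hsqrt hτ, ← Real.rpow_neg hτ.le, quadExpansion, ← hsqrt hτ, Real.sqrt_eq_rpow]
    push_cast
    ring_nf
  · rw [← Real.rpow_natCast, ← Real.rpow_mul hτ.le]
    norm_num

theorem stmt14 (κ θ ξ v ρ t : ℝ) (hκ : 0 < κ) (hθ : 0 < θ) (hξ : 0 < ξ)
    (hv : 0 < v) (hρ : ρ ∈ Set.Ioo (-1 : ℝ) 1) (ht : 0 < t)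
    (k : ℝ) (hk : k ≠ 0) (ustar : ℝ → ℝ)
    (hustar : ∀ᶠ τ in 𝓝[>] (0 : ℝ), ustar τ ∈ hestDom κ θ ξ v ρ t τ ∧
      deriv (hestLambda κ θ ξ v ρ t τ) (ustar τ) = (k : ℂ)) :
    (fun τ : ℝ =>
        (1 - 2 * (betaT κ ξ t : ℂ) *
            hestB κ ρ ξ ((ustar τ : ℝ) / ((Real.sqrt τ : ℝ) : ℂ)) τ) *
          ((τ ^ (-(1 : ℝ) / 4) : ℝ) : ℂ) -
        (((coefE0 κ θ ξ v ρ t k : ℝ) : ℂ) +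
          ((coefE1 κ θ ξ v ρ t k : ℝ) : ℂ) * ((τ ^ ((1 : ℝ) / 4) : ℝ) : ℂ) +
          ((coefE2 κ θ ξ v ρ t k : ℝ) : ℂ) * ((τ ^ ((1 : ℝ) / 2) : ℝ) : ℂ)))
      =O[𝓝[>] (0 : ℝ)] fun τ : ℝ => τ ^ ((3 : ℝ) / 4) := by
  exact stmt14_general κ θ ξ v ρ t hκ.ne' hθ.ne' hξ.ne' hv ht k hk ustar hustar

end
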